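/- arXiv:1409.3583 — 4 statements merged into one kernel-verified Lean document; each statement's English description precedes it below -/
import Mathlib

section
/- Let G be a finite simple gap-free graph and let e = uv be an edge of G. If the 3-path ideal I_3(G) is nonzero, then the colon ideal (I_3(G) : x_u x_v) is generated in degree one; in particular it is a prime ideal generated by variables. -/
open MvPolynomial

/-! Graph-theoretic definitions -/

/-- A list of vertices is a path in `G`: consecutive vertices are adjacent and all
vertices are distinct. -/
def SimpleGraph.IsPathList {V : Type*} (G : SimpleGraph V) (l : List V) : Prop :=
  l.Chain' G.Adj ∧ l.Nodup

/-- The `t`-path ideal of a graph: the ideal generated by the monomials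
`x_{v_1} ⋯ x_{v_t}` where `v_1 ⋯ v_t` is a path on `t` distinct vertices of `G`. -/
noncomputable def pathIdeal {V K : Type*} [CommRing K] (G : SimpleGraph V) (t : ℕ) :
    Ideal (MvPolynomial V K) :=
  Ideal.span { p | ∃ l : List V, G.IsPathList l ∧ l.length = t ∧ p = (l.map X).prod }

/-- The edge ideal of a graph. -/
noncomputable def edgeIdeal {V K : Type*} [CommRing K] (G : SimpleGraph V) :
    Ideal (MvPolynomial V K) :=
  Ideal.span { p | ∃ u v, G.Adj u v ∧ p = X u * X v }

/-- `G` is gap-free: any two vertex-disjoint edges are joined by an edge. -/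
def SimpleGraph.GapFree {V : Type*} (G : SimpleGraph V) : Prop :=
  ∀ a b c d : V, G.Adj a b → G.Adj c d → a ≠ c → a ≠ d → b ≠ c → b ≠ d →
    (G.Adj a c ∨ G.Adj a d ∨ G.Adj b c ∨ G.Adj b d)

/-- `G` is claw-free: it has no induced `K_{1,3}`. -/
def SimpleGraph.ClawFree {V : Type*} (G : SimpleGraph V) : Prop :=
  ∀ v a b c : V, G.Adj v a → G.Adj v b → G.Adj v c → a ≠ b → a ≠ c → b ≠ c →
    (G.Adj a b ∨ G.Adj a c ∨ G.Adj b c)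

/-- `G` is cricket-free: it has no induced cricket. -/
def SimpleGraph.CricketFree {V : Type*} (G : SimpleGraph V) : Prop :=
  ¬ ∃ w1 w2 w3 w4 w5 : V,
      w1 ≠ w2 ∧ w1 ≠ w3 ∧ w1 ≠ w4 ∧ w1 ≠ w5 ∧ w2 ≠ w3 ∧ w2 ≠ w4 ∧ w2 ≠ w5 ∧
      w3 ≠ w4 ∧ w3 ≠ w5 ∧ w4 ≠ w5 ∧
      G.Adj w1 w3 ∧ G.Adj w2 w3 ∧ G.Adj w3 w4 ∧ G.Adj w3 w5 ∧ G.Adj w4 w5 ∧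
      ¬ G.Adj w1 w2 ∧ ¬ G.Adj w1 w4 ∧ ¬ G.Adj w1 w5 ∧ ¬ G.Adj w2 w4 ∧ ¬ G.Adj w2 w5

/-- `w : Fin n → V` is an induced cycle of length `n` in `H`. -/
def SimpleGraph.IsInducedCycle {V : Type*} (H : SimpleGraph V) {n : ℕ} (w : Fin n → V) :
    Prop :=
  3 ≤ n ∧ Function.Injective w ∧
    ∀ i j : Fin n, H.Adj (w i) (w j) ↔
      ((j : ℕ) = ((i : ℕ) + 1) % n ∨ (i : ℕ) = ((j : ℕ) + 1) % n)

/-- A graph is chordal if it has no induced cycle of length at least four. -/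
def SimpleGraph.Chordal {V : Type*} (H : SimpleGraph V) : Prop :=
  ∀ (n : ℕ), 4 ≤ n → ∀ w : Fin n → V, ¬ H.IsInducedCycle w

/-! Monomial ideals, graded Betti numbers via the Taylor complex, and
Castelnuovo–Mumford regularity. -/

/-- The monomial ideal generated by the monomials with exponent vectors `gens`. -/
noncomputable def monomialSpan {V K : Type*} [CommRing K] {k : ℕ}
    (gens : Fin k → (V →₀ ℕ)) : Ideal (MvPolynomial V K) :=
  Ideal.span (Set.range fun i => monomial (gens i) (1 : K))

/-- The total degree of an exponent vector. -/
def monomialDegree {V : Type*} (m : V →₀ ℕ) : ℕ := m.sum fun _ n => n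

/-- `m` is a minimal monomial generator of the monomial ideal `I`. -/
def IsMinimalMonomialGen {V K : Type*} [CommRing K] (I : Ideal (MvPolynomial V K))
    (m : V →₀ ℕ) : Prop :=
  monomial m (1 : K) ∈ I ∧ ∀ m' : V →₀ ℕ, m' ≤ m → m' ≠ m → monomial m' (1 : K) ∉ I

/-- The lcm of the monomials `gens i`, `i ∈ T`. -/
noncomputable def taylorLcm {V : Type*} {k : ℕ} (gens : Fin k → (V →₀ ℕ))
    (T : Finset (Fin k)) : V →₀ ℕ :=
  T.sup gens

open Classical in
/-- The boundary of a basis element of the Taylor complex of `gens`, tensored with the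
residue field `K`: only the terms where the lcm is unchanged survive. -/
noncomputable def taylorBoundary {V K : Type*} [Field K] {k : ℕ}
    (gens : Fin k → (V →₀ ℕ)) (T : Finset (Fin k)) : Finset (Fin k) →₀ K :=
  ∑ t ∈ T, if taylorLcm gens (T.erase t) = taylorLcm gens T then
      ((-1 : K) ^ (T.filter fun s => s < t).card) • Finsupp.single (T.erase t) (1 : K)
    else 0

/-- The differential of the Taylor complex of `gens` tensored with `K`. -/
noncomputable def taylorDiff {V K : Type*} [Field K] {k : ℕ}
    (gens : Fin k → (V →₀ ℕ)) : (Finset (Fin k) →₀ K) →ₗ[K] (Finset (Fin k) →₀ K) :=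
  Finsupp.lsum K fun T =>
    LinearMap.toSpanSingleton K (Finset (Fin k) →₀ K) (taylorBoundary gens T)

/-- The graded piece of the Taylor complex in homological degree `i` and internal
degree `j`. -/
noncomputable def taylorPiece {V K : Type*} [Field K] {k : ℕ}
    (gens : Fin k → (V →₀ ℕ)) (i j : ℕ) : Submodule K (Finset (Fin k) →₀ K) :=
  Submodule.span K { f | ∃ T : Finset (Fin k), T.card = i ∧
    monomialDegree (taylorLcm gens T) = j ∧ f = Finsupp.single T (1 : K) }

/-- Nonvanishing of the degree-`j` part of the `i`-th homology of the Taylor complex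
of `gens` tensored with `K`; since the Taylor complex is a graded free resolution of
`S/I` (where `I` is the ideal generated by the monomials `gens`), this says exactly
that `Tor_i^S(S/I, K)_j ≠ 0`. -/
noncomputable def taylorHomologyNonzero {V K : Type*} [Field K] {k : ℕ}
    (gens : Fin k → (V →₀ ℕ)) (i j : ℕ) : Prop :=
  ¬ (LinearMap.ker (taylorDiff (K := K) gens) ⊓ taylorPiece (K := K) gens i j ≤
      Submodule.map (taylorDiff (K := K) gens) (taylorPiece (K := K) gens (i + 1) j))

/-- For a monomial ideal `I`, `Tor_i^S(I, K)_j ≠ 0`.  (Since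
`Tor_i^S(I,K) ≅ Tor_{i+1}^S(S/I,K)`, this is computed from the Taylor complex on any
family of monomial generators of `I`.) -/
def IdealTorNonzero {V K : Type*} [Field K] (I : Ideal (MvPolynomial V K))
    (i j : ℕ) : Prop :=
  ∃ (k : ℕ) (gens : Fin k → (V →₀ ℕ)), I = monomialSpan gens ∧
    taylorHomologyNonzero (K := K) gens (i + 1) j

/-- The Castelnuovo–Mumford regularity of a monomial ideal `I`:
`reg I = max { j - i : Tor_i^S(I, K)_j ≠ 0 }`. -/
noncomputable def reg {V K : Type*} [Field K] (I : Ideal (MvPolynomial V K)) : ℕ :=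
  sSup { d | ∃ i j : ℕ, IdealTorNonzero I i j ∧ d = j - i }

/-!
Let `N` be the set of vertices outside `{u, v}` adjacent to `u` or `v`. In a gap-free graph every
edge other than `uv` meets `N`. A path on three vertices has two edges, not both equal to `uv`, so
`I_3(G)` lies in the ideal `(x_w : w ∈ N)`. As `u` and `v` are not in `N`, multiplication by
`x_u x_v` is injective modulo this ideal, which therefore contains the colon. Conversely
`x_w x_u x_v` is a path monomial for every `w ∈ N`.
-/

section VariableIdeals

variable {σ τ R : Type*}

theorem ker_killCompl_eq_span_X_image [CommRing R] {f : σ → τ} (hf : f.Injective) :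
    RingHom.ker (killCompl (R := R) hf) = Ideal.span (X '' (Set.range f)ᶜ) := by
  set I : Ideal (MvPolynomial τ R) := Ideal.span (X '' (Set.range f)ᶜ)
  apply le_antisymm
  · intro p hp
    have hmk : ((Ideal.Quotient.mkₐ R I).comp (rename f)).comp (killCompl hf) =
        Ideal.Quotient.mkₐ R I := by
      ext i
      by_cases hi : i ∈ Set.range f
      · obtain ⟨j, rfl⟩ := hi
        have hX : killCompl (R := R) hf (X (f j)) = X j := by
          rw [← rename_X, killCompl_rename_app]
        simp [hX]
      · have hX : X i ∈ I := Ideal.subset_span ⟨i, hi, rfl⟩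
        simp [killCompl, hi, Ideal.Quotient.eq_zero_iff_mem.mpr hX]
    rw [← Ideal.Quotient.eq_zero_iff_mem, ← Ideal.Quotient.mkₐ_eq_mk R, ← hmk]
    simp [RingHom.mem_ker.mp hp]
  · rw [Ideal.span_le]
    rintro _ ⟨i, hi, rfl⟩
    have hf_ne : ∀ j, f j ≠ i := fun j hj ↦ hi ⟨j, hj⟩
    simp [killCompl, hf_ne]

theorem isPrime_span_X_image [CommRing R] [IsDomain R] (s : Set σ) :
    (Ideal.span (X '' s : Set (MvPolynomial σ R))).IsPrime := by
  have hker := ker_killCompl_eq_span_X_image (R := R) (Subtype.val_injective (p := (· ∈ sᶜ)))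
  rw [Subtype.range_coe, compl_compl] at hker
  exact hker ▸ RingHom.ker_isPrime _

theorem mul_X_mem_span_X_image_iff [CommSemiring R] {s : Set σ} {i : σ} (hi : i ∉ s)
    {p : MvPolynomial σ R} :
    p * X i ∈ Ideal.span (X '' s) ↔ p ∈ Ideal.span (X '' s) := by
  refine ⟨fun h ↦ mem_ideal_span_X_image.mpr fun m hm ↦ ?_, Ideal.mul_mem_right _ _⟩
  have hm' : m + Finsupp.single i 1 ∈ (p * X i).support := by
    simpa [coeff_mul_X] using hm
  obtain ⟨j, hj, hmj⟩ := mem_ideal_span_X_image.mp h _ hm'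
  have hij : i ≠ j := fun h ↦ hi (h ▸ hj)
  exact ⟨j, hj, by simpa [hij] using hmj⟩

end VariableIdeals

section PathIdeals

variable {V R : Type*} {G : SimpleGraph V} {u v : V}

/-- The open neighbourhood of the edge `uv`: the vertices other than `u` and `v` that are adjacent
to `u` or to `v`. Its variables generate the colon ideal `(I_3(G) : x_u x_v)`. -/
def edgeNeighborSet (G : SimpleGraph V) (u v : V) : Set V :=
  (G.neighborSet u ∪ G.neighborSet v) \ {u, v}

theorem mem_edgeNeighborSet {w : V} :
    w ∈ edgeNeighborSet G u v ↔ (G.Adj u w ∨ G.Adj v w) ∧ w ≠ u ∧ w ≠ v := by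
  simp [edgeNeighborSet]

theorem mem_edgeNeighborSet_of_adj {a b : V} (hab : G.Adj a b) (ha : a = u ∨ a = v)
    (hb : ¬(b = u ∨ b = v)) : b ∈ edgeNeighborSet G u v := by
  rw [mem_edgeNeighborSet, ← not_or]
  refine ⟨?_, hb⟩
  rcases ha with rfl | rfl
  exacts [.inl hab, .inr hab]

theorem eq_or_mem_edgeNeighborSet_of_adj (hG : G.GapFree) (huv : G.Adj u v) {a b : V}
    (hab : G.Adj a b) :
    s(a, b) = s(u, v) ∨ a ∈ edgeNeighborSet G u v ∨ b ∈ edgeNeighborSet G u v := by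
  by_cases ha : a = u ∨ a = v <;> by_cases hb : b = u ∨ b = v
  · have huv_eq : s(a, b) = s(u, v) := by grind [hab.ne]
    exact .inl huv_eq
  · exact .inr (.inr (mem_edgeNeighborSet_of_adj hab ha hb))
  · exact .inr (.inl (mem_edgeNeighborSet_of_adj hab.symm hb ha))
  · have hgap : G.Adj u a ∨ G.Adj u b ∨ G.Adj v a ∨ G.Adj v b := by
      grind [hG u v a b huv hab]
    grind [mem_edgeNeighborSet]

theorem exists_mem_edgeNeighborSet_of_isPathList (hG : G.GapFree) (huv : G.Adj u v) {l : List V}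
    (hl : G.IsPathList l) (hlen : 3 ≤ l.length) : ∃ w ∈ l, w ∈ edgeNeighborSet G u v := by
  match l, hl, hlen with
  | a :: b :: c :: l, ⟨.cons_cons hab (.cons_cons hbc _), hnodup⟩, _ =>
    have hac : a ≠ c := by
      rintro rfl
      simp at hnodup
    rcases eq_or_mem_edgeNeighborSet_of_adj hG huv hab with hab_eq | ha | hb
    · rcases eq_or_mem_edgeNeighborSet_of_adj hG huv hbc with hbc_eq | hb | hc
      · have hedges : s(b, a) = s(b, c) := by rw [Sym2.eq_swap, hab_eq, hbc_eq]
        exact absurd (Sym2.congr_right.mp hedges) hac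
      · exact ⟨b, by simp, hb⟩
      · exact ⟨c, by simp, hc⟩
    · exact ⟨a, by simp, ha⟩
    · exact ⟨b, by simp, hb⟩

variable [CommRing R]

theorem pathIdeal_le_span_X_edgeNeighborSet (hG : G.GapFree) (huv : G.Adj u v) {t : ℕ}
    (ht : 3 ≤ t) :
    pathIdeal (K := R) G t ≤ Ideal.span (X '' edgeNeighborSet G u v) := by
  rw [pathIdeal, Ideal.span_le]
  rintro _ ⟨l, hl, rfl, rfl⟩
  obtain ⟨w, hwl, hw⟩ := exists_mem_edgeNeighborSet_of_isPathList hG huv hl ht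
  have hdvd : (X w : MvPolynomial V R) ∣ (l.map X).prod :=
    List.dvd_prod (List.mem_map_of_mem hwl)
  exact Ideal.mem_of_dvd _ hdvd (Ideal.subset_span ⟨w, hw, rfl⟩)

theorem X_mul_X_mul_X_mem_pathIdeal {a b c : V} (hab : G.Adj a b) (hbc : G.Adj b c)
    (hac : a ≠ c) : (X a * X b * X c : MvPolynomial V R) ∈ pathIdeal G 3 := by
  refine Ideal.subset_span ⟨[a, b, c], ⟨?_, ?_⟩, rfl, by simp [mul_assoc]⟩
  · exact .cons_cons hab (.cons_cons hbc (.singleton c))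
  · simp [hab.ne, hbc.ne, hac]

theorem X_mul_X_mul_X_mem_pathIdeal_of_mem_edgeNeighborSet (huv : G.Adj u v) {w : V}
    (hw : w ∈ edgeNeighborSet G u v) :
    (X w * (X u * X v) : MvPolynomial V R) ∈ pathIdeal G 3 := by
  obtain ⟨huw | hvw, hwu, hwv⟩ := mem_edgeNeighborSet.mp hw
  · simpa only [mul_assoc] using X_mul_X_mul_X_mem_pathIdeal huw.symm huv hwv
  · simpa only [mul_comm (X w)] using X_mul_X_mul_X_mem_pathIdeal huv hvw hwu.symm

theorem colon_pathIdeal_three (hG : G.GapFree) (huv : G.Adj u v) :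
    (pathIdeal (K := R) G 3).colon (Ideal.span {X u * X v} : Ideal (MvPolynomial V R)) =
      Ideal.span (X '' edgeNeighborSet G u v) := by
  apply le_antisymm
  · intro p hp
    have hu : u ∉ edgeNeighborSet G u v := by simp [edgeNeighborSet]
    have hv : v ∉ edgeNeighborSet G u v := by simp [edgeNeighborSet]
    rw [Ideal.mem_colon_span_singleton] at hp
    have hmem := pathIdeal_le_span_X_edgeNeighborSet hG huv le_rfl hp
    rwa [← mul_assoc, mul_X_mem_span_X_image_iff hv, mul_X_mem_span_X_image_iff hu] at hmem
  · rw [Ideal.span_le]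
    rintro _ ⟨w, hw, rfl⟩
    exact Ideal.mem_colon_span_singleton.mpr
      (X_mul_X_mul_X_mem_pathIdeal_of_mem_edgeNeighborSet huv hw)

end PathIdeals

theorem stmt0_general {V R : Type*} [CommRing R] [IsDomain R] (G : SimpleGraph V)
    (hgap : G.GapFree) (u v : V) (he : G.Adj u v) :
    (∃ S1 : Set (MvPolynomial V R), (∀ p ∈ S1, p.IsHomogeneous 1) ∧
        (pathIdeal (K := R) G 3).colon
          (Ideal.span {X u * X v} : Ideal (MvPolynomial V R)) = Ideal.span S1) ∧
    (∃ s : Set V,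
        (pathIdeal (K := R) G 3).colon
          (Ideal.span {X u * X v} : Ideal (MvPolynomial V R)) = Ideal.span (X '' s)) ∧
    ((pathIdeal (K := R) G 3).colon
      (Ideal.span {X u * X v} : Ideal (MvPolynomial V R))).IsPrime := by
  have hcolon := colon_pathIdeal_three (R := R) hgap he
  refine ⟨⟨_, ?_, hcolon⟩, ⟨_, hcolon⟩, hcolon ▸ isPrime_span_X_image _⟩
  rintro _ ⟨w, -, rfl⟩
  exact isHomogeneous_X R w

/-- For a finite simple gap-free graph `G` with edge `uv` and `I_3(G) ≠ 0`,
the colon ideal `(I_3(G) : x_u x_v)` is generated in degree one; in particular it is a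
prime ideal generated by variables. -/
theorem stmt0 {V K : Type*} [Fintype V] [Field K] (G : SimpleGraph V)
    (hgap : G.GapFree) (u v : V) (he : G.Adj u v)
    (h3 : pathIdeal (K := K) G 3 ≠ ⊥) :
    (∃ S1 : Set (MvPolynomial V K), (∀ p ∈ S1, p.IsHomogeneous 1) ∧
        Submodule.colon (pathIdeal (K := K) G 3) (Ideal.span {X u * X v} : Ideal (MvPolynomial V K)) =
          Ideal.span S1) ∧
    (∃ s : Set V,
        Submodule.colon (pathIdeal (K := K) G 3) (Ideal.span {X u * X v} : Ideal (MvPolynomial V K)) =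
          Ideal.span ((fun w => (X w : MvPolynomial V K)) '' s)) ∧
    (Submodule.colon (pathIdeal (K := K) G 3) (Ideal.span {X u * X v} : Ideal (MvPolynomial V K))).IsPrime :=
  stmt0_general G hgap u v he
end

section
/- Let G be a finite simple gap-free graph with edge ideal I(G) and nonzero 3-path ideal I_3(G). If reg(I(G)) = r, then reg(I_3(G)) ≤ max{r, 3}. -/
open MvPolynomial

/-!
Let `q₁, …, qₙ` be the edge monomials, so that `I(G) = I₃(G) + (q₁, …, qₙ)`, and delete them one at
a time. For `J` between `I₃(G)` and `I(G)` and an edge monomial `q`, the exact sequence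
`0 → S/(J : q)(-2) → S/J → S/(J + (q)) → 0` gives `reg J ≤ max {reg (J + (q)), reg (J : q) + 2}`.
In a gap-free graph every edge other than `q` contains a vertex that extends `q` to a path on three
vertices, so `J : q` is generated by variables unless it is the unit ideal, and contributes at
most `3`.

On Taylor complexes the exact sequence is a mapping cone: the simplices that contain the vertex `q`
form the Taylor complex of `J : q`.
-/

section SupportedFinsupp

variable {α K N : Type*} [CommRing K] [AddCommGroup N] [Module K N] {s : Set α} {c : α →₀ K}

lemma map_mem_of_mem_supported {p : Submodule K N} (f : (α →₀ K) →ₗ[K] N)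
    (hf : ∀ a ∈ s, f (Finsupp.single a 1) ∈ p) (hc : c ∈ Finsupp.supported K K s) :
    f c ∈ p := by
  rw [Finsupp.supported_eq_span_single] at hc
  have span_le : Submodule.span K ((fun a => Finsupp.single a (1 : K)) '' s) ≤ p.comap f :=
    Submodule.span_le.2 <| Set.image_subset_iff.2 hf
  exact span_le hc

lemma map_eq_of_mem_supported {f f' : (α →₀ K) →ₗ[K] N}
    (hf : ∀ a ∈ s, f (Finsupp.single a 1) = f' (Finsupp.single a 1))
    (hc : c ∈ Finsupp.supported K K s) : f c = f' c :=
  sub_eq_zero.1 <| map_mem_of_mem_supported (p := ⊥) (f - f')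
    (fun a ha => sub_eq_zero.2 (hf a ha)) hc

end SupportedFinsupp

section FaceSign

variable {ι : Type*} [LinearOrder ι] (K : Type*) [CommRing K]

/-- The sign with which the face opposite to `t` enters the boundary of the simplex `T`. It is
also used for `t ∉ T`, where it is the sign of `t` in `insert t T`. -/
def faceSign (t : ι) (T : Finset ι) : K :=
  (-1) ^ (T.filter fun s => s < t).card

lemma faceSign_mul_self (t : ι) (T : Finset ι) : faceSign K t T * faceSign K t T = 1 := by
  rw [faceSign, ← mul_pow, neg_one_mul, neg_neg, one_pow]

lemma faceSign_insert {a : ι} {T : Finset ι} (ha : a ∉ T) (t : ι) :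
    faceSign K t (insert a T) = if a < t then -faceSign K t T else faceSign K t T := by
  unfold faceSign
  rw [Finset.filter_insert]
  split_ifs
  · rw [Finset.card_insert_of_notMem (fun h => ha (Finset.mem_of_mem_filter a h)), pow_succ,
      mul_neg_one]
  · rfl

lemma faceSign_insert_self {a : ι} {T : Finset ι} (ha : a ∉ T) :
    faceSign K a (insert a T) = faceSign K a T := by
  rw [faceSign_insert K ha, if_neg (lt_irrefl a)]

lemma faceSign_mul_faceSign_insert {a t : ι} {T : Finset ι} (ha : a ∉ T) (ht : t ∈ T) :
    faceSign K a T * faceSign K t (insert a T) =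
      -(faceSign K t T * faceSign K a (T.erase t)) := by
  have haT : faceSign K a T =
      if t < a then -faceSign K a (T.erase t) else faceSign K a (T.erase t) := by
    rw [← faceSign_insert K (Finset.notMem_erase t T), Finset.insert_erase ht]
  rw [haT, faceSign_insert K ha]
  rcases lt_or_gt_of_ne (ne_of_mem_of_not_mem ht ha) with h | h
  · rw [if_pos h, if_neg h.not_gt]
    ring
  · rw [if_neg h.not_gt, if_pos h]
    ring

end FaceSign

section ColonComplex

variable {ι M : Type*} [SemilatticeSup M] [OrderBot M]
variable (K : Type*) [CommRing K] (g : ι → M) (m : M)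

/-- The chains that avoid the vertex `a`. -/
abbrev chainsAvoiding (a : ι) : Submodule K (Finset ι →₀ K) :=
  Finsupp.supported K K {T | a ∉ T}

/-- The simplices with `i` vertices, all in `A`, whose multidegree lies in `Q`. -/
def colonCells (A : Finset ι) (i : ℕ) (Q : Set M) : Set (Finset ι) :=
  {T | T ⊆ A ∧ T.card = i ∧ m ⊔ T.sup g ∈ Q}

/-- The strand with multidegrees in `Q`, in homological degree `i`, of the Taylor complex of
`(g t : t ∈ A) : m`. -/
noncomputable abbrev colonPiece (A : Finset ι) (i : ℕ) (Q : Set M) :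
    Submodule K (Finset ι →₀ K) :=
  Finsupp.supported K K (colonCells g m A i Q)

open Classical in
/-- The chain map from the complex of `(g) : (m ⊔ g a)` to that of `(g) : m` which covers
multiplication by the generator `g a : m`: it keeps the simplices whose multidegree already
absorbs `g a`. -/
noncomputable def mulGenerator (a : ι) : (Finset ι →₀ K) →ₗ[K] (Finset ι →₀ K) :=
  Finsupp.linearCombination K fun T =>
    if m ⊔ T.sup g = m ⊔ g a ⊔ T.sup g then Finsupp.single T 1 else 0

variable {K g m} {a : ι} {A B : Finset ι} {i : ℕ} {Q : Set M} {c : Finset ι →₀ K}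

open Classical in
lemma mulGenerator_single (T : Finset ι) (r : K) :
    mulGenerator K g m a (Finsupp.single T r) =
      if m ⊔ T.sup g = m ⊔ g a ⊔ T.sup g then Finsupp.single T r else 0 := by
  rw [mulGenerator, Finsupp.linearCombination_single, smul_ite, smul_zero, Finsupp.smul_single,
    smul_eq_mul, mul_one]

lemma colonPiece_mono (h : A ⊆ B) : colonPiece K g m A i Q ≤ colonPiece K g m B i Q :=
  Finsupp.supported_mono fun _ hT => ⟨hT.1.trans h, hT.2⟩

lemma colonPiece_le_chainsAvoiding (ha : a ∉ A) :
    colonPiece K g m A i Q ≤ chainsAvoiding K a :=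
  Finsupp.supported_mono fun _ hT haT => ha (hT.1 haT)

lemma mulGenerator_mem_supported {s s' : Set (Finset ι)}
    (h : ∀ T ∈ s, m ⊔ T.sup g = m ⊔ g a ⊔ T.sup g → T ∈ s')
    (hc : c ∈ Finsupp.supported K K s) : mulGenerator K g m a c ∈ Finsupp.supported K K s' := by
  refine map_mem_of_mem_supported _ (fun T hT => ?_) hc
  rw [mulGenerator_single]
  split_ifs with hTa
  · exact Finsupp.single_mem_supported K _ (h T hT hTa)
  · exact Submodule.zero_mem _

lemma mulGenerator_mem_chainsAvoiding {b : ι} (hc : c ∈ chainsAvoiding K b) :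
    mulGenerator K g m a c ∈ chainsAvoiding K b :=
  mulGenerator_mem_supported (fun _ hT _ => hT) hc

lemma mulGenerator_mem_colonPiece (hc : c ∈ colonPiece K g (m ⊔ g a) A i Q) :
    mulGenerator K g m a c ∈ colonPiece K g m A i Q :=
  mulGenerator_mem_supported (fun _ hT h => ⟨hT.1, hT.2.1, h ▸ hT.2.2⟩) hc

lemma mulGenerator_eq_self (h : g a ≤ m) (c : Finset ι →₀ K) : mulGenerator K g m a c = c := by
  refine map_eq_of_mem_supported (s := Set.univ) (f := mulGenerator K g m a)
    (f' := LinearMap.id) (fun T _ => ?_) (by simp)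
  rw [mulGenerator_single, if_pos (by rw [sup_eq_left.2 h]), LinearMap.id_apply]

variable [LinearOrder ι]

variable (K g m)

open Classical in
/-- The boundary of the simplex `T` in the Taylor complex of the colon ideal `(g) : m`, tensored
with the residue field. The multidegrees are shifted by `m`, so that `T` sits in multidegree
`m ⊔ T.sup g`; the monomials may be taken in any join-semilattice. -/
noncomputable def colonBoundary (T : Finset ι) : Finset ι →₀ K :=
  ∑ t ∈ T, if m ⊔ (T.erase t).sup g = m ⊔ T.sup g then
    Finsupp.single (T.erase t) (faceSign K t T) else 0

/-- The differential of the Taylor complex of the colon ideal `(g) : m`, tensored with the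
residue field. -/
noncomputable def colonDiff : (Finset ι →₀ K) →ₗ[K] (Finset ι →₀ K) :=
  Finsupp.linearCombination K (colonBoundary K g m)

/-- Adding the vertex `a` to the simplices of a chain that avoids `a`. -/
noncomputable def insertVertex (a : ι) : (Finset ι →₀ K) →ₗ[K] (Finset ι →₀ K) :=
  Finsupp.linearCombination K fun T => Finsupp.single (insert a T) (faceSign K a T)

/-- Removing the vertex `a` from the simplices of a chain, where simplices that avoid `a` are
sent to `0`; a left inverse of `insertVertex` on chains that avoid `a`. -/
noncomputable def eraseVertex (a : ι) : (Finset ι →₀ K) →ₗ[K] (Finset ι →₀ K) :=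
  Finsupp.linearCombination K fun T =>
    if a ∈ T then Finsupp.single (T.erase a) (faceSign K a (T.erase a)) else 0

/-- Exactness in homological degree `i` and multidegrees in `Q` of the Taylor complex of
`(g t : t ∈ A) : m` tensored with the residue field, that is, vanishing of
`Tor_i(S / ((g t : t ∈ A) : m), K)` in the corresponding degrees, shifted by `m`. -/
def ColonExact (A : Finset ι) (i : ℕ) (Q : Set M) : Prop :=
  ∀ c ∈ colonPiece K g m A i Q, colonDiff K g m c = 0 →
    ∃ d ∈ colonPiece K g m A (i + 1) Q, colonDiff K g m d = c

variable {K g m}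

lemma colonDiff_single (T : Finset ι) (r : K) :
    colonDiff K g m (Finsupp.single T r) = r • colonBoundary K g m T :=
  Finsupp.linearCombination_single K r T

lemma insertVertex_single (T : Finset ι) (r : K) :
    insertVertex K a (Finsupp.single T r) = Finsupp.single (insert a T) (r * faceSign K a T) := by
  rw [insertVertex, Finsupp.linearCombination_single, Finsupp.smul_single, smul_eq_mul]

lemma eraseVertex_single_of_mem {T : Finset ι} (ha : a ∈ T) (r : K) :
    eraseVertex K a (Finsupp.single T r) =
      Finsupp.single (T.erase a) (r * faceSign K a (T.erase a)) := by
  rw [eraseVertex, Finsupp.linearCombination_single, if_pos ha, Finsupp.smul_single, smul_eq_mul]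

lemma eraseVertex_single_of_notMem {T : Finset ι} (ha : a ∉ T) (r : K) :
    eraseVertex K a (Finsupp.single T r) = 0 := by
  rw [eraseVertex, Finsupp.linearCombination_single, if_neg ha, smul_zero]

lemma sup_sup_insert (T : Finset ι) : m ⊔ (insert a T).sup g = m ⊔ g a ⊔ T.sup g := by
  rw [Finset.sup_insert, sup_assoc]

lemma sup_sup_erase_le (T : Finset ι) (t : ι) : m ⊔ (T.erase t).sup g ≤ m ⊔ T.sup g :=
  sup_le_sup_left (Finset.sup_mono (Finset.erase_subset t T)) m

lemma colonDiff_mem_chainsAvoiding (hc : c ∈ chainsAvoiding K a) :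
    colonDiff K g m c ∈ chainsAvoiding K a := by
  refine map_mem_of_mem_supported _ (fun T haT => ?_) hc
  rw [colonDiff_single, one_smul]
  refine Submodule.sum_mem _ fun t _ => ?_
  split_ifs
  · exact Finsupp.single_mem_supported K _ fun h => haT (Finset.mem_of_mem_erase h)
  · exact Submodule.zero_mem _

lemma insertVertex_mem_colonPiece (ha : a ∉ A) (hc : c ∈ colonPiece K g (m ⊔ g a) A i Q) :
    insertVertex K a c ∈ colonPiece K g m (insert a A) (i + 1) Q := by
  refine map_mem_of_mem_supported _ (fun T hT => ?_) hc
  obtain ⟨hTA, hTi, hTQ⟩ := hT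
  rw [insertVertex_single]
  refine Finsupp.single_mem_supported K _ ⟨Finset.insert_subset_insert a hTA, ?_, ?_⟩
  · rw [Finset.card_insert_of_notMem fun h => ha (hTA h), hTi]
  · rwa [sup_sup_insert]

lemma eraseVertex_insertVertex (hc : c ∈ chainsAvoiding K a) :
    eraseVertex K a (insertVertex K a c) = c := by
  refine map_eq_of_mem_supported (f := eraseVertex K a ∘ₗ insertVertex K a)
    (f' := LinearMap.id) (fun T haT => ?_) hc
  rw [LinearMap.comp_apply, insertVertex_single,
    eraseVertex_single_of_mem (Finset.mem_insert_self a T), Finset.erase_insert haT, mul_assoc,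
    faceSign_mul_self, mul_one, LinearMap.id_apply]

lemma eraseVertex_eq_zero (hc : c ∈ chainsAvoiding K a) : eraseVertex K a c = 0 :=
  map_eq_of_mem_supported (f' := 0) (fun _ haT => eraseVertex_single_of_notMem haT 1) hc

lemma add_insertVertex_eq_iff {x y z : Finset ι →₀ K} (hx : x ∈ chainsAvoiding K a)
    (hy : y ∈ chainsAvoiding K a) (hz : z ∈ chainsAvoiding K a) :
    x + insertVertex K a y = z ↔ x = z ∧ y = 0 := by
  refine ⟨fun h => ?_, fun ⟨hxz, hy0⟩ => by rw [hxz, hy0, map_zero, add_zero]⟩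
  have hy0 : y = 0 := by
    simpa only [map_add, eraseVertex_insertVertex hy, eraseVertex_eq_zero hx,
      eraseVertex_eq_zero hz, zero_add] using congrArg (eraseVertex K a) h
  exact ⟨by rwa [hy0, map_zero, add_zero] at h, hy0⟩

/- For `i = 0` the truncated `i - 1` is harmless: the only cell `∅` avoids `a`. -/
lemma exists_eq_add_insertVertex (hc : c ∈ colonPiece K g m (insert a A) i Q) :
    ∃ x ∈ colonPiece K g m A i Q, ∃ y ∈ colonPiece K g (m ⊔ g a) A (i - 1) Q,
      x + insertVertex K a y = c := by
  suffices h : c ∈ colonPiece K g m A i Q ⊔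
      (colonPiece K g (m ⊔ g a) A (i - 1) Q).map (insertVertex K a) by
    simpa only [Submodule.mem_sup, Submodule.mem_map, exists_exists_and_eq_and] using h
  refine map_mem_of_mem_supported LinearMap.id (fun T hT => ?_) hc
  obtain ⟨hTA, hTi, hTQ⟩ := hT
  rw [LinearMap.id_apply]
  by_cases haT : a ∈ T
  · refine Submodule.mem_sup_right ⟨Finsupp.single (T.erase a) (faceSign K a (T.erase a)), ?_, ?_⟩
    · refine Finsupp.single_mem_supported K _ ⟨Finset.subset_insert_iff.1 hTA, ?_, ?_⟩
      · rw [Finset.card_erase_of_mem haT, hTi]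
      · rwa [← sup_sup_insert, Finset.insert_erase haT]
    · rw [insertVertex_single, Finset.insert_erase haT, faceSign_mul_self]
  · exact Submodule.mem_sup_left <| Finsupp.single_mem_supported K _
      ⟨(Finset.subset_insert_iff_of_notMem haT).1 hTA, hTi, hTQ⟩

lemma colonDiff_insertVertex_single {T : Finset ι} (haT : a ∉ T) :
    colonDiff K g m (insertVertex K a (Finsupp.single T 1)) =
      mulGenerator K g m a (Finsupp.single T 1) -
        insertVertex K a (colonDiff K g (m ⊔ g a) (Finsupp.single T 1)) := by
  rw [insertVertex_single, one_mul, colonDiff_single, colonBoundary, Finset.sum_insert haT,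
    Finset.erase_insert haT, smul_add, sub_eq_add_neg]
  congr 1
  · rw [mulGenerator_single, sup_sup_insert, smul_ite, smul_zero, Finsupp.smul_single,
      smul_eq_mul, faceSign_insert_self K haT, faceSign_mul_self]
  · rw [colonDiff_single, one_smul, colonBoundary, map_sum, Finset.smul_sum,
      ← Finset.sum_neg_distrib]
    refine Finset.sum_congr rfl fun t ht => ?_
    rw [Finset.erase_insert_of_ne (ne_of_mem_of_not_mem ht haT).symm, sup_sup_insert,
      sup_sup_insert]
    split_ifs
    · rw [insertVertex_single, Finsupp.smul_single, smul_eq_mul,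
        faceSign_mul_faceSign_insert K haT ht, Finsupp.single_neg]
    · rw [map_zero, smul_zero, neg_zero]

lemma colonDiff_insertVertex (hc : c ∈ chainsAvoiding K a) :
    colonDiff K g m (insertVertex K a c) =
      mulGenerator K g m a c - insertVertex K a (colonDiff K g (m ⊔ g a) c) :=
  map_eq_of_mem_supported (f := colonDiff K g m ∘ₗ insertVertex K a)
    (f' := mulGenerator K g m a - insertVertex K a ∘ₗ colonDiff K g (m ⊔ g a))
    (fun _ haT => colonDiff_insertVertex_single haT) hc

open Classical in
lemma colonDiff_mulGenerator (a : ι) (c : Finset ι →₀ K) :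
    colonDiff K g m (mulGenerator K g m a c) =
      mulGenerator K g m a (colonDiff K g (m ⊔ g a) c) := by
  refine map_eq_of_mem_supported (s := Set.univ) (f := colonDiff K g m ∘ₗ mulGenerator K g m a)
    (f' := mulGenerator K g m a ∘ₗ colonDiff K g (m ⊔ g a)) (fun T _ => ?_) (by simp)
  have le_sup_generator (U : Finset ι) : m ⊔ U.sup g ≤ m ⊔ g a ⊔ U.sup g :=
    sup_le_sup_right le_sup_left _
  have face_iff (t : ι) :
      (m ⊔ T.sup g = m ⊔ g a ⊔ T.sup g ∧ m ⊔ (T.erase t).sup g = m ⊔ T.sup g) ↔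
        (m ⊔ g a ⊔ (T.erase t).sup g = m ⊔ g a ⊔ T.sup g ∧
          m ⊔ (T.erase t).sup g = m ⊔ g a ⊔ (T.erase t).sup g) := by
    have hm := sup_sup_erase_le (g := g) (m := m) T t
    have hma := sup_sup_erase_le (g := g) (m := m ⊔ g a) T t
    have hT := le_sup_generator T
    have hTt := le_sup_generator (T.erase t)
    constructor <;> rintro ⟨h₁, h₂⟩ <;> constructor <;> order
  have ite_sum_zero (P : Prop) [Decidable P] (f : ι → Finset ι →₀ K) :
      (if P then ∑ t ∈ T, f t else 0) = ∑ t ∈ T, if P then f t else 0 := by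
    rw [Finset.sum_ite_irrel, Finset.sum_const_zero]
  rw [LinearMap.comp_apply, LinearMap.comp_apply, mulGenerator_single,
    apply_ite (colonDiff K g m), map_zero, colonDiff_single, colonDiff_single, one_smul, one_smul,
    colonBoundary, colonBoundary, map_sum, ite_sum_zero]
  refine Finset.sum_congr rfl fun t _ => ?_
  rw [apply_ite (mulGenerator K g m a), map_zero, mulGenerator_single, ← ite_and, ← ite_and]
  exact if_congr (face_iff t) rfl rfl

lemma colonDiff_add_insertVertex_eq_iff {x y z : Finset ι →₀ K} (hx : x ∈ chainsAvoiding K a)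
    (hy : y ∈ chainsAvoiding K a) (hz : z ∈ chainsAvoiding K a) :
    colonDiff K g m (x + insertVertex K a y) = z ↔
      colonDiff K g m x + mulGenerator K g m a y = z ∧ colonDiff K g (m ⊔ g a) y = 0 := by
  have diff_eq : colonDiff K g m (x + insertVertex K a y) =
      colonDiff K g m x + mulGenerator K g m a y +
        insertVertex K a (-colonDiff K g (m ⊔ g a) y) := by
    rw [map_add, colonDiff_insertVertex hy, map_neg]
    abel
  rw [diff_eq, add_insertVertex_eq_iff
    (add_mem (colonDiff_mem_chainsAvoiding hx) (mulGenerator_mem_chainsAvoiding hy))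
    (neg_mem (colonDiff_mem_chainsAvoiding hy)) hz, neg_eq_zero]

namespace ColonExact

lemma of_forall_notMem (h : ∀ T, T ∉ colonCells g m A i Q) : ColonExact K g m A i Q := by
  intro c hc _
  have hc0 : c = 0 := map_eq_of_mem_supported (f := LinearMap.id) (f' := 0)
    (fun T hT => absurd hT (h T)) hc
  exact ⟨0, Submodule.zero_mem _, by rw [hc0, map_zero]⟩

/- The complex of `(g t : t ∈ insert a A) : m` is the mapping cone of `mulGenerator` on the
complexes of `A`; `insert` and `of_insert` are read off its long exact sequence. -/
lemma insert (ha : a ∉ A) (hA : ColonExact K g m A (i + 1) Q)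
    (ha' : ColonExact K g (m ⊔ g a) A i Q) : ColonExact K g m (insert a A) (i + 1) Q := by
  intro c hc hDc
  obtain ⟨x, hx, y, hy, rfl⟩ := exists_eq_add_insertVertex hc
  have avoid {m' : M} {n : ℕ} {z : Finset ι →₀ K} (hz : z ∈ colonPiece K g m' A n Q) :
      z ∈ chainsAvoiding K a := colonPiece_le_chainsAvoiding ha hz
  obtain ⟨hDx, hDy⟩ := (colonDiff_add_insertVertex_eq_iff (avoid hx) (avoid hy)
    (Submodule.zero_mem _)).1 hDc
  obtain ⟨v, hv, rfl⟩ := ha' y hy hDy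
  obtain ⟨u, hu, hDu⟩ := hA (x + mulGenerator K g m a v)
    (add_mem hx (mulGenerator_mem_colonPiece hv)) (by rw [map_add, colonDiff_mulGenerator, hDx])
  refine ⟨u - insertVertex K a v, sub_mem (colonPiece_mono (Finset.subset_insert a A) hu)
    (insertVertex_mem_colonPiece ha hv), ?_⟩
  rw [map_sub, hDu, colonDiff_insertVertex (avoid hv)]
  abel

lemma of_insert (ha : a ∉ A) (h : ColonExact K g m (Insert.insert a A) i Q)
    (ha' : ColonExact K g (m ⊔ g a) A i Q) : ColonExact K g m A i Q := by
  intro c hc hDc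
  have avoid {m' : M} {n : ℕ} {z : Finset ι →₀ K} (hz : z ∈ colonPiece K g m' A n Q) :
      z ∈ chainsAvoiding K a := colonPiece_le_chainsAvoiding ha hz
  obtain ⟨d, hd, hDd⟩ := h c (colonPiece_mono (Finset.subset_insert a A) hc) hDc
  obtain ⟨x, hx, y, hy, rfl⟩ := exists_eq_add_insertVertex hd
  obtain ⟨hDx, hDy⟩ := (colonDiff_add_insertVertex_eq_iff (avoid hx) (avoid hy) (avoid hc)).1 hDd
  obtain ⟨v, hv, rfl⟩ := ha' y hy hDy
  refine ⟨x + mulGenerator K g m a v, add_mem hx (mulGenerator_mem_colonPiece hv), ?_⟩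
  rwa [map_add, colonDiff_mulGenerator]

/- If `g b ≤ m` then `(g) : m` is the unit ideal, and `insertVertex b` is a contraction. -/
lemma of_mem_of_le {b : ι} (hb : b ∈ A) (h : g b ≤ m) : ColonExact K g m A i Q := by
  intro c hc hDc
  have hmb : m ⊔ g b = m := sup_eq_left.2 h
  rw [← Finset.insert_erase hb] at hc ⊢
  have hbA := Finset.notMem_erase b A
  obtain ⟨x, hx, y, hy, rfl⟩ := exists_eq_add_insertVertex hc
  have avoid {m' : M} {n : ℕ} {z : Finset ι →₀ K} (hz : z ∈ colonPiece K g m' (A.erase b) n Q) :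
      z ∈ chainsAvoiding K b := colonPiece_le_chainsAvoiding hbA hz
  obtain ⟨hDx, -⟩ := (colonDiff_add_insertVertex_eq_iff (avoid hx) (avoid hy)
    (Submodule.zero_mem _)).1 hDc
  rw [mulGenerator_eq_self h] at hDx
  refine ⟨insertVertex K b x, insertVertex_mem_colonPiece hbA (by rwa [hmb]), ?_⟩
  rw [colonDiff_insertVertex (avoid hx), mulGenerator_eq_self h, hmb,
    eq_neg_of_add_eq_zero_left hDx, map_neg, sub_neg_eq_add]

lemma of_subset (hBA : B ⊆ A) (hB : ColonExact K g m B (i + 1) Q)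
    (h : ∀ a ∈ A, ∃ b ∈ B, g b ≤ m ⊔ g a) : ColonExact K g m A (i + 1) Q := by
  suffices key : ∀ C ⊆ A, ColonExact K g m (B ∪ C) (i + 1) Q by
    simpa only [Finset.union_eq_right.2 hBA] using key A Finset.Subset.rfl
  intro C
  induction C using Finset.induction with
  | empty => exact fun _ => by rwa [Finset.union_empty]
  | insert a C _ ih =>
    intro haC
    obtain ⟨haA, hCA⟩ := Finset.insert_subset_iff.1 haC
    rw [Finset.union_insert]
    by_cases haBC : a ∈ B ∪ C
    · rw [Finset.insert_eq_of_mem haBC]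
      exact ih hCA
    · obtain ⟨b, hbB, hba⟩ := h a haA
      exact (ih hCA).insert haBC (of_mem_of_le (Finset.mem_union_left C hbB) hba)

lemma of_superset (hBA : B ⊆ A) (hA : ColonExact K g m A i Q)
    (h : ∀ a ∈ A, ∀ A', B ⊆ A' → a ∉ A' → ColonExact K g (m ⊔ g a) A' i Q) :
    ColonExact K g m B i Q := by
  suffices key : ∀ C ⊆ A, ColonExact K g m (B ∪ C) i Q → ColonExact K g m B i Q from
    key A Finset.Subset.rfl (by rwa [Finset.union_eq_right.2 hBA])
  intro C
  induction C using Finset.induction with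
  | empty => exact fun _ hBC => by rwa [Finset.union_empty] at hBC
  | insert a C _ ih =>
    intro haC hBC
    obtain ⟨haA, hCA⟩ := Finset.insert_subset_iff.1 haC
    rw [Finset.union_insert] at hBC
    by_cases haBC : a ∈ B ∪ C
    · rw [Finset.insert_eq_of_mem haBC] at hBC
      exact ih hCA hBC
    · exact ih hCA (hBC.of_insert haBC (h a haA _ Finset.subset_union_left haBC))

end ColonExact

end ColonComplex

section OrderEmbedding

variable {ι κ M K : Type*} [SemilatticeSup M] [OrderBot M] [CommRing K] {g : κ → M} {m : M}
variable {i : ℕ} {Q : Set M} {A : Finset ι}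

lemma colonCells_map (φ : ι ↪ κ) :
    colonCells g m (A.map φ) i Q = Finset.map φ '' colonCells (g ∘ φ) m A i Q := by
  ext T
  constructor
  · rintro ⟨hTA, hTi, hTQ⟩
    obtain ⟨U, hUA, rfl⟩ := Finset.subset_map_iff.1 hTA
    rw [Finset.card_map] at hTi
    rw [Finset.sup_map] at hTQ
    exact ⟨U, ⟨hUA, hTi, hTQ⟩, rfl⟩
  · rintro ⟨U, ⟨hUA, hUi, hUQ⟩, rfl⟩
    exact ⟨Finset.map_subset_map.2 hUA, by rwa [Finset.card_map], by rwa [Finset.sup_map]⟩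

lemma colonPiece_map (φ : ι ↪ κ) :
    colonPiece K g m (A.map φ) i Q =
      (colonPiece K (g ∘ φ) m A i Q).map (Finsupp.lmapDomain K K (Finset.map φ)) := by
  rw [colonPiece, colonPiece, Finsupp.lmapDomain_supported, colonCells_map]

variable [LinearOrder ι] [LinearOrder κ] (φ : ι ↪o κ)

lemma faceSign_map (t : ι) (T : Finset ι) :
    faceSign K (φ t) (T.map φ.toEmbedding) = faceSign K t T := by
  have filter_map : (T.map φ.toEmbedding).filter (· < φ t) =
      (T.filter (· < t)).map φ.toEmbedding := by
    rw [Finset.filter_map]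
    congr 1
    exact Finset.filter_congr fun s _ => φ.lt_iff_lt
  rw [faceSign, faceSign, filter_map, Finset.card_map]

open Classical in
lemma colonDiff_lmapDomain (c : Finset ι →₀ K) :
    colonDiff K g m (Finsupp.lmapDomain K K (Finset.map φ.toEmbedding) c) =
      Finsupp.lmapDomain K K (Finset.map φ.toEmbedding) (colonDiff K (g ∘ φ) m c) := by
  refine map_eq_of_mem_supported (s := Set.univ)
    (f := colonDiff K g m ∘ₗ Finsupp.lmapDomain K K (Finset.map φ.toEmbedding))
    (f' := Finsupp.lmapDomain K K (Finset.map φ.toEmbedding) ∘ₗ colonDiff K (g ∘ φ) m)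
    (fun T _ => ?_) (by simp)
  rw [LinearMap.comp_apply, LinearMap.comp_apply, Finsupp.lmapDomain_apply,
    Finsupp.mapDomain_single, colonDiff_single, colonDiff_single, one_smul, one_smul,
    colonBoundary, colonBoundary, Finset.sum_map, map_sum]
  refine Finset.sum_congr rfl fun t _ => ?_
  have erase_map : (T.map φ.toEmbedding).erase (φ.toEmbedding t) =
      (T.erase t).map φ.toEmbedding := (Finset.map_erase _ _ _).symm
  rw [apply_ite (Finsupp.lmapDomain K K (Finset.map φ.toEmbedding)), map_zero,
    Finsupp.lmapDomain_apply, Finsupp.mapDomain_single, erase_map, Finset.sup_map, Finset.sup_map]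
  exact if_congr Iff.rfl (congrArg _ (faceSign_map φ t T)) rfl

lemma colonExact_map_iff :
    ColonExact K g m (A.map φ.toEmbedding) i Q ↔ ColonExact K (g ∘ φ) m A i Q := by
  have lmapDomain_injective :
      Function.Injective (Finsupp.lmapDomain K K (Finset.map φ.toEmbedding)) :=
    Finsupp.mapDomain_injective (Finset.map_injective _)
  simp only [ColonExact, colonPiece_map, Submodule.mem_map, forall_exists_index, and_imp,
    forall_apply_eq_imp_iff₂, exists_exists_and_eq_and, colonDiff_lmapDomain,
    lmapDomain_injective.eq_iff, map_eq_zero_iff _ lmapDomain_injective]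
  rfl

end OrderEmbedding

section Append

variable {M K : Type*} [SemilatticeSup M] [OrderBot M] [CommRing K] {k n : ℕ}
variable {f : Fin k → M} {e : Fin n → M} {m : M} {i : ℕ} {Q : Set M}

lemma colonExact_append_castAdd_iff :
    ColonExact K (Fin.append f e) m (Finset.univ.map (Fin.castAddEmb n)) i Q ↔
      ColonExact K f m Finset.univ i Q := by
  have append_comp : Fin.append f e ∘ Fin.castAddOrderEmb n = f :=
    funext (Fin.append_left f e)
  rw [show Fin.castAddEmb n = (Fin.castAddOrderEmb n).toEmbedding from rfl, colonExact_map_iff,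
    append_comp]

lemma colonExact_append_natAdd_iff :
    ColonExact K (Fin.append f e) m (Finset.univ.map (Fin.natAddEmb k)) i Q ↔
      ColonExact K e m Finset.univ i Q := by
  have append_comp : Fin.append f e ∘ Fin.natAddOrderEmb k = e :=
    funext (Fin.append_right f e)
  rw [show Fin.natAddEmb k = (Fin.natAddOrderEmb k).toEmbedding from rfl, colonExact_map_iff,
    append_comp]

namespace ColonExact

lemma left_of_append (h : ColonExact K (Fin.append f e) m Finset.univ i Q)
    (he : ∀ t A, (∀ s, Fin.castAdd n s ∈ A) → Fin.natAdd k t ∉ A →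
      ColonExact K (Fin.append f e) (m ⊔ e t) A i Q) : ColonExact K f m Finset.univ i Q := by
  refine (colonExact_append_castAdd_iff (e := e)).1
    (h.of_superset (Finset.subset_univ _) fun a _ A hA haA => ?_)
  have castAdd_mem (s : Fin k) : Fin.castAdd n s ∈ A :=
    hA (Finset.mem_map_of_mem _ (Finset.mem_univ s))
  induction a using Fin.addCases with
  | left s => exact absurd (castAdd_mem s) haA
  | right t =>
    rw [Fin.append_right]
    exact he t A castAdd_mem haA

/- Two families that generate the same ideal are compared through their concatenation. -/
lemma of_forall_exists_le (h : ColonExact K f m Finset.univ (i + 1) Q)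
    (hfe : ∀ t, ∃ s, f s ≤ e t) (hef : ∀ s, ∃ t, e t ≤ f s) :
    ColonExact K e m Finset.univ (i + 1) Q := by
  have append_exact : ColonExact K (Fin.append f e) m Finset.univ (i + 1) Q := by
    refine (colonExact_append_castAdd_iff.2 h).of_subset (Finset.subset_univ _) fun a _ => ?_
    obtain ⟨s, hs⟩ : ∃ s, f s ≤ Fin.append f e a := by
      induction a using Fin.addCases with
      | left s => exact ⟨s, (Fin.append_left f e s).ge⟩
      | right t => simpa only [Fin.append_right] using hfe t
    exact ⟨Fin.castAdd n s, Finset.mem_map_of_mem _ (Finset.mem_univ s),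
      (Fin.append_left f e s).le.trans (le_sup_of_le_right hs)⟩
  refine (colonExact_append_natAdd_iff (f := f)).1
    (append_exact.of_superset (Finset.subset_univ _) fun a _ A hA _ => ?_)
  obtain ⟨t, ht⟩ : ∃ t, e t ≤ Fin.append f e a := by
    induction a using Fin.addCases with
    | left s => simpa only [Fin.append_left] using hef s
    | right t => exact ⟨t, (Fin.append_right f e t).ge⟩
  exact of_mem_of_le (hA (Finset.mem_map_of_mem (Fin.natAddEmb k) (Finset.mem_univ t)))
    ((Fin.append_right f e t).le.trans (le_sup_of_le_right ht))

end ColonExact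

end Append

section LinearColon

variable {V : Type*}

lemma monomialDegree_eq_degree (p : V →₀ ℕ) : monomialDegree p = p.degree :=
  (Finsupp.degree_apply p).symm

lemma add_single_le_sup_of_lt {m p : V →₀ ℕ} {w : V} (h : m w < p w) :
    m + Finsupp.single w 1 ≤ m ⊔ p := by
  intro v
  rw [Finsupp.add_apply, Finsupp.sup_apply]
  by_cases hv : v = w
  · rw [hv, Finsupp.single_eq_same]
    exact le_sup_of_le_right h
  · rw [Finsupp.single_eq_of_ne hv, add_zero]
    exact le_sup_left

lemma sup_eq_add_single {m p : V →₀ ℕ} {w : V} (h : p ≤ m + Finsupp.single w 1)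
    (hp : ¬ p ≤ m) : m ⊔ p = m + Finsupp.single w 1 := by
  obtain ⟨v, hv⟩ : ∃ v, m v < p v := by
    simpa only [Finsupp.le_def, not_forall, not_le] using hp
  have hvw : v = w := by
    by_contra hne
    have := h v
    rw [Finsupp.add_apply, Finsupp.single_eq_of_ne hne, add_zero] at this
    exact hv.not_ge this
  exact le_antisymm (sup_le le_self_add h) (add_single_le_sup_of_lt (hvw ▸ hv))

lemma monomialDegree_sup_sup {ι : Type*} {g : ι → V →₀ ℕ} {m : V →₀ ℕ} {T : Finset ι}
    (hT : ∀ t ∈ T, ∃ w, m ⊔ g t = m + Finsupp.single w 1)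
    (hinj : Set.InjOn (fun t => m ⊔ g t) T) :
    monomialDegree (m ⊔ T.sup g) = monomialDegree m + T.card := by
  classical
  induction T using Finset.induction with
  | empty => simp only [Finset.sup_empty, sup_bot_eq, Finset.card_empty, add_zero]
  | insert a T haT ih =>
    obtain ⟨w, hw⟩ := hT a (Finset.mem_insert_self a T)
    have apply_le : ∀ t ∈ T, g t w ≤ m w := by
      intro t ht
      obtain ⟨w', hw'⟩ := hT t (Finset.mem_insert_of_mem ht)
      have hne : w ≠ w' := by
        rintro rfl
        exact haT (hinj (Finset.mem_insert_of_mem ht) (Finset.mem_insert_self a T)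
          (hw'.trans hw.symm) ▸ ht)
      have hle : g t ≤ m + Finsupp.single w' 1 := hw' ▸ le_sup_right
      simpa only [Finsupp.add_apply, Finsupp.single_eq_of_ne hne, add_zero] using hle w
    have sup_apply_le : (m ⊔ T.sup g) w ≤ m w :=
      sup_le le_rfl <| Finset.sup_induction (p := fun x : V →₀ ℕ => x w ≤ m w) (Nat.zero_le _)
        (fun _ hx _ hy => sup_le hx hy) apply_le
    have lt_apply : m w < g a w := by
      have := congrArg (fun x : V →₀ ℕ => x w) hw
      simp only [Finsupp.sup_apply, Finsupp.add_apply, Finsupp.single_eq_same] at this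
      omega
    have hga : g a ≤ m ⊔ T.sup g + Finsupp.single w 1 :=
      (le_sup_right.trans hw.le).trans (add_le_add_left le_sup_left _)
    rw [Finset.sup_insert, sup_left_comm, sup_comm,
      sup_eq_add_single hga fun hle => (lt_apply.trans_le (hle w)).not_ge sup_apply_le,
      monomialDegree_eq_degree, map_add, Finsupp.degree_single, ← monomialDegree_eq_degree,
      ih (fun t ht => hT t (Finset.mem_insert_of_mem ht)) (hinj.mono (by simp)),
      Finset.card_insert_of_notMem haT, add_assoc]

variable {ι K : Type*} [LinearOrder ι] [CommRing K] {g : ι → V →₀ ℕ} {m : V →₀ ℕ}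
variable {A : Finset ι} {i j : ℕ}

/- The hypothesis says that `(g t : t ∈ A) : m` is generated by variables; after discarding
redundant generators, the strand in question has no cells. -/
lemma ColonExact.of_generated_by_variables
    (h : ∀ a ∈ A, ∃ w, m w < g a w ∧ ∃ b ∈ A, m ⊔ g b = m + Finsupp.single w 1)
    (hj : j ≠ monomialDegree m + (i + 1)) :
    ColonExact K g m A (i + 1) (monomialDegree ⁻¹' {j}) := by
  obtain ⟨B, hBL, bijOn⟩ := Set.exists_subset_bijOn
    {b | b ∈ A ∧ ∃ w, m ⊔ g b = m + Finsupp.single w 1} (fun b => m ⊔ g b)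
  lift B to Finset ι using A.finite_toSet.subset fun b hb => (hBL hb).1
  have exact_of_variables : ColonExact K g m B (i + 1) (monomialDegree ⁻¹' {j}) := by
    refine .of_forall_notMem fun T ⟨hTB, hTi, hTj⟩ => hj ?_
    rw [← show _ = j from hTj, monomialDegree_sup_sup (fun t ht => (hBL (hTB ht)).2)
      (bijOn.injOn.mono hTB), hTi]
  refine exact_of_variables.of_subset (fun b hb => (hBL hb).1) fun a ha => ?_
  obtain ⟨w, hw, b, hbA, hb⟩ := h a ha
  obtain ⟨b', hb'B, hb'⟩ := bijOn.surjOn (Set.mem_image_of_mem _ ⟨hbA, w, hb⟩)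
  have hb' : m ⊔ g b' = m ⊔ g b := hb'
  exact ⟨b', hb'B, le_sup_right.trans (hb'.trans hb |>.le.trans (add_single_le_sup_of_lt hw))⟩

end LinearColon

section Regularity

variable {V K : Type*}

lemma monomialSpan_append [CommRing K] {k n : ℕ} (f : Fin k → V →₀ ℕ) (e : Fin n → V →₀ ℕ) :
    monomialSpan (K := K) (Fin.append f e) = monomialSpan f ⊔ monomialSpan e := by
  rw [monomialSpan, monomialSpan, monomialSpan, ← Ideal.span_union]
  congr 1
  ext p
  rw [← not_iff_not]
  simp only [Set.mem_range, Set.mem_union, not_or, not_exists, Fin.forall_fin_add,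
    Fin.append_left, Fin.append_right]

lemma monomial_mem_monomialSpan_iff [CommRing K] [Nontrivial K] {k : ℕ} {f : Fin k → V →₀ ℕ}
    {p : V →₀ ℕ} : monomial p (1 : K) ∈ monomialSpan f ↔ ∃ t, f t ≤ p := by
  classical
  rw [monomialSpan, Set.range_comp' (fun s => monomial s (1 : K)) f,
    mem_ideal_span_monomial_image, support_monomial, if_neg one_ne_zero]
  simp only [Finset.mem_singleton, forall_eq, Set.exists_range_iff]

variable [Field K]

lemma taylorPiece_eq_colonPiece {k : ℕ} (f : Fin k → V →₀ ℕ) (i j : ℕ) :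
    taylorPiece (K := K) f i j =
      colonPiece K f ⊥ Finset.univ i (monomialDegree ⁻¹' {j}) := by
  rw [taylorPiece, colonPiece, Finsupp.supported_eq_span_single]
  congr 1
  ext c
  simp only [colonCells, taylorLcm, Set.mem_ofPred_eq, Set.mem_image, Finset.subset_univ, true_and,
    bot_sup_eq, Set.mem_preimage, Set.mem_singleton_iff, and_assoc, eq_comm]

lemma taylorDiff_eq_colonDiff {k : ℕ} (f : Fin k → V →₀ ℕ) :
    taylorDiff (K := K) f = colonDiff K f ⊥ := by
  refine Finsupp.lhom_ext' fun T => LinearMap.ext_ring ?_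
  rw [LinearMap.comp_apply, LinearMap.comp_apply, Finsupp.lsingle_apply, taylorDiff,
    Finsupp.lsum_single, LinearMap.toSpanSingleton_apply, colonDiff_single, taylorBoundary,
    colonBoundary]
  refine congrArg _ (Finset.sum_congr rfl fun t _ => ?_)
  rw [taylorLcm, taylorLcm, bot_sup_eq, bot_sup_eq, Finsupp.smul_single, smul_eq_mul, mul_one]
  congr

lemma taylorHomologyNonzero_iff_not_colonExact {k : ℕ} (f : Fin k → V →₀ ℕ) (i j : ℕ) :
    taylorHomologyNonzero (K := K) f i j ↔
      ¬ ColonExact K f ⊥ Finset.univ i (monomialDegree ⁻¹' {j}) := by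
  rw [taylorHomologyNonzero, taylorDiff_eq_colonDiff, taylorPiece_eq_colonPiece,
    taylorPiece_eq_colonPiece, ColonExact, SetLike.le_def]
  simp only [Submodule.mem_inf, LinearMap.mem_ker, Submodule.mem_map, and_imp]
  exact not_congr ⟨fun h c hc hDc => h hDc hc, fun h c hDc hc => h c hc hDc⟩

lemma idealTorNonzero_monomialSpan_iff {k : ℕ} {f : Fin k → V →₀ ℕ} {i j : ℕ} :
    IdealTorNonzero (monomialSpan (K := K) f) i j ↔
      ¬ ColonExact K f ⊥ Finset.univ (i + 1) (monomialDegree ⁻¹' {j}) := by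
  constructor
  · rintro ⟨n, e, hef, he⟩ hf
    refine (taylorHomologyNonzero_iff_not_colonExact e _ _).1 he (hf.of_forall_exists_le ?_ ?_)
    · intro t
      rw [← monomial_mem_monomialSpan_iff (K := K), hef, monomial_mem_monomialSpan_iff]
      exact ⟨t, le_rfl⟩
    · intro s
      rw [← monomial_mem_monomialSpan_iff (K := K), ← hef, monomial_mem_monomialSpan_iff]
      exact ⟨s, le_rfl⟩
  · exact fun h => ⟨k, f, rfl, (taylorHomologyNonzero_iff_not_colonExact f _ _).2 h⟩

lemma le_reg_of_idealTorNonzero {k : ℕ} {f : Fin k → V →₀ ℕ} {i j : ℕ}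
    (h : IdealTorNonzero (monomialSpan (K := K) f) i j) :
    j - i ≤ reg (monomialSpan (K := K) f) := by
  let degree (T : Finset (Fin k)) : ℕ := monomialDegree (⊥ ⊔ T.sup f)
  refine le_csSup ⟨Finset.univ.sup degree, ?_⟩ ⟨i, j, h, rfl⟩
  rintro _ ⟨i', j', h', rfl⟩
  obtain ⟨T, hT⟩ : ∃ T, T ∈ colonCells f ⊥ Finset.univ (i' + 1) (monomialDegree ⁻¹' {j'}) := by
    by_contra! no_cells
    exact idealTorNonzero_monomialSpan_iff.1 h' (.of_forall_notMem no_cells)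
  calc j' - i' ≤ j' := Nat.sub_le j' i'
    _ = degree T := hT.2.2.symm
    _ ≤ Finset.univ.sup degree := Finset.le_sup (Finset.mem_univ T)

/- The hypothesis on `p` makes each colon ideal by `e t` met while deleting generators the unit
ideal or generated by variables, so that its homology lies on the linear strand. -/
theorem reg_le_max_reg_sup_monomialSpan {n d : ℕ} {e : Fin n → V →₀ ℕ}
    {J : Ideal (MvPolynomial V K)} (hd : ∀ t, monomialDegree (e t) = d)
    (h : ∀ t p, monomial p (1 : K) ∈ J ∨ p ∈ Set.range e → p ≠ e t →
      ∃ w, e t w < p w ∧ monomial (e t + Finsupp.single w 1) (1 : K) ∈ J) :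
    reg J ≤ max (reg (J ⊔ monomialSpan e)) (d + 1) := by
  refine csSup_le' ?_
  rintro _ ⟨i, j, ⟨k, f, rfl, hf⟩, rfl⟩
  rw [taylorHomologyNonzero_iff_not_colonExact] at hf
  by_contra! hlt
  obtain ⟨hreg, hdij⟩ := max_lt_iff.1 hlt
  rw [← monomialSpan_append] at hreg
  have append_exact : ColonExact K (Fin.append f e) ⊥ Finset.univ (i + 1)
      (monomialDegree ⁻¹' {j}) := by
    by_contra hne
    exact (le_reg_of_idealTorNonzero (idealTorNonzero_monomialSpan_iff.2 hne)).not_gt hreg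
  refine hf (append_exact.left_of_append fun t A hA _ => ?_)
  rw [bot_sup_eq]
  by_cases hunit : ∃ b ∈ A, Fin.append f e b ≤ e t
  · obtain ⟨b, hbA, hb⟩ := hunit
    exact .of_mem_of_le hbA hb
  refine .of_generated_by_variables (fun a haA => ?_) (by rw [hd]; omega)
  have hmem : monomial (Fin.append f e a) (1 : K) ∈ monomialSpan f ∨
      Fin.append f e a ∈ Set.range e := by
    induction a using Fin.addCases with
    | left s => exact .inl (monomial_mem_monomialSpan_iff.2 ⟨s, (Fin.append_left f e s).ge⟩)
    | right s => exact .inr ⟨s, (Fin.append_right f e s).symm⟩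
  obtain ⟨w, hw, hwJ⟩ := h t _ hmem fun heq => hunit ⟨a, haA, heq.le⟩
  obtain ⟨s, hs⟩ := monomial_mem_monomialSpan_iff.1 hwJ
  rw [← Fin.append_left f e s] at hs
  exact ⟨w, hw, _, hA s, sup_eq_add_single hs fun hle => hunit ⟨_, hA s, hle⟩⟩

end Regularity

section EdgeMonomial

variable {V : Type*}

/-- The exponent vector of `x_u x_v` for the edge `s(u, v)`, the generator of the edge ideal. -/
noncomputable def edgeMonomial (e : Sym2 V) : V →₀ ℕ :=
  Sym2.lift ⟨fun u v => Finsupp.single u 1 + Finsupp.single v 1, fun _ _ => add_comm _ _⟩ e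

lemma edgeMonomial_mk (u v : V) :
    edgeMonomial s(u, v) = Finsupp.single u 1 + Finsupp.single v 1 := rfl

lemma edgeMonomial_apply_eq_zero_iff {e : Sym2 V} {w : V} : edgeMonomial e w = 0 ↔ w ∉ e := by
  induction e with | _ u v
  rw [edgeMonomial_mk, Finsupp.add_apply, Nat.add_eq_zero_iff, Finsupp.single_apply_eq_zero,
    Finsupp.single_apply_eq_zero, Sym2.mem_iff]
  simp only [one_ne_zero, imp_false, not_or]

lemma monomialDegree_edgeMonomial (e : Sym2 V) : monomialDegree (edgeMonomial e) = 2 := by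
  induction e with | _ u v
  rw [edgeMonomial_mk, monomialDegree_eq_degree, map_add, Finsupp.degree_single,
    Finsupp.degree_single]

end EdgeMonomial

section GapFree

variable {V : Type*} {G : SimpleGraph V}

lemma exists_adj_of_gapFree (hgap : G.GapFree) {e e' : Sym2 V} (he : e ∈ G.edgeSet)
    (he' : e' ∈ G.edgeSet) (hne : e' ≠ e) : ∃ w ∈ e', w ∉ e ∧ ∃ x ∈ e, G.Adj x w := by
  by_cases hdisj : ∃ x ∈ e', x ∈ e
  · obtain ⟨x, hxe', hxe⟩ := hdisj
    obtain ⟨w, rfl⟩ := Sym2.mem_iff_exists.1 hxe'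
    have hadj : G.Adj x w := he'
    refine ⟨w, Sym2.mem_mk_right x w, fun hwe => hne ?_, x, hxe, hadj⟩
    exact ((Sym2.mem_and_mem_iff hadj.ne).1 ⟨hxe, hwe⟩).symm
  · push Not at hdisj
    induction e with | _ u v
    induction e' with | _ a b
    have ha := hdisj a (Sym2.mem_mk_left a b)
    have hb := hdisj b (Sym2.mem_mk_right a b)
    simp only [Sym2.mem_iff, not_or] at ha hb
    have hjoin := hgap u v a b he he' (Ne.symm ha.1) (Ne.symm hb.1) (Ne.symm ha.2) (Ne.symm hb.2)
    simp only [Sym2.mem_iff, exists_eq_or_imp, exists_eq_left, not_or]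
    tauto

end GapFree

section PathIdeal

variable {V K : Type*} {G : SimpleGraph V} {t : ℕ}

lemma isPathList_iff {l : List V} : G.IsPathList l ↔ l.IsChain G.Adj ∧ l.Nodup := Iff.rfl

variable [CommRing K]

lemma prod_map_X (l : List V) :
    (l.map X).prod = monomial (l.map fun v => Finsupp.single v 1).sum (1 : K) := by
  induction l with
  | nil => rfl
  | cons v l ih =>
    rw [List.map_cons, List.prod_cons, ih, X, monomial_mul, one_mul, List.map_cons,
      List.sum_cons]

lemma pathIdeal_le_edgeIdeal (ht : 2 ≤ t) : pathIdeal (K := K) G t ≤ edgeIdeal G := by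
  refine Ideal.span_le.2 ?_
  rintro _ ⟨l, hl, rfl, rfl⟩
  obtain ⟨u, v, l', rfl⟩ : ∃ u v l', l = u :: v :: l' := by
    match l, ht with
    | u :: v :: l', _ => exact ⟨u, v, l', rfl⟩
  rw [isPathList_iff, List.isChain_cons_cons] at hl
  rw [List.map_cons, List.map_cons, List.prod_cons, List.prod_cons, ← mul_assoc]
  exact Ideal.mul_mem_right _ _ (Ideal.subset_span ⟨u, v, hl.1.1, rfl⟩)

lemma edgeIdeal_eq_monomialSpan {n : ℕ} (edge : Fin n ≃ G.edgeSet) :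
    edgeIdeal (K := K) G = monomialSpan fun i => edgeMonomial (edge i : Sym2 V) := by
  have X_mul_X (u v : V) : (X u * X v : MvPolynomial V K) = monomial (edgeMonomial s(u, v)) 1 := by
    rw [X, X, monomial_mul, one_mul, edgeMonomial_mk]
  rw [edgeIdeal, monomialSpan]
  congr 1
  ext p
  constructor
  · rintro ⟨u, v, huv, rfl⟩
    obtain ⟨i, hi⟩ := edge.surjective ⟨s(u, v), G.mem_edgeSet.2 huv⟩
    exact ⟨i, by simp only [hi, X_mul_X]⟩
  · rintro ⟨i, rfl⟩
    rcases hi : edge i with ⟨⟨u, v⟩, he⟩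
    exact ⟨u, v, he, by simp only [hi, X_mul_X]⟩

lemma monomial_edgeMonomial_add_single_mem_pathIdeal {e : Sym2 V} {x w : V} (he : e ∈ G.edgeSet)
    (hx : x ∈ e) (hw : w ∉ e) (hadj : G.Adj x w) :
    monomial (edgeMonomial e + Finsupp.single w 1) (1 : K) ∈ pathIdeal G 3 := by
  obtain ⟨u, rfl⟩ := Sym2.mem_iff_exists.1 hx
  have hux : G.Adj u x := G.adj_symm he
  have huw : u ≠ w := fun h => hw (h ▸ Sym2.mem_mk_right x u)
  refine Ideal.subset_span ⟨[u, x, w], ⟨?_, ?_⟩, rfl, ?_⟩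
  · exact .cons_cons hux (.cons_cons hadj (.singleton w))
  · simp [hux.ne, huw, hadj.ne]
  · rw [prod_map_X, List.map_cons, List.map_cons, List.map_singleton, List.sum_cons, List.sum_cons,
      List.sum_singleton, Sym2.eq_swap, edgeMonomial_mk, add_assoc]

variable [Nontrivial K]

lemma monomial_mem_pathIdeal_iff {p : V →₀ ℕ} :
    monomial p (1 : K) ∈ pathIdeal G t ↔ ∃ l : List V, G.IsPathList l ∧ l.length = t ∧
      (l.map fun v => Finsupp.single v 1).sum ≤ p := by
  classical
  have pathIdeal_eq : pathIdeal (K := K) G t = Ideal.span ((fun s => monomial s (1 : K)) ''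
      {s | ∃ l : List V, G.IsPathList l ∧ l.length = t ∧
        s = (l.map fun v => Finsupp.single v 1).sum}) := by
    rw [pathIdeal]
    congr 1
    ext q
    simp only [prod_map_X, Set.mem_image, Set.mem_ofPred_eq]
    aesop
  rw [pathIdeal_eq, mem_ideal_span_monomial_image, support_monomial, if_neg one_ne_zero]
  simp only [Finset.mem_singleton, forall_eq, Set.mem_ofPred_eq]
  aesop

lemma exists_edgeMonomial_le_of_monomial_mem_pathIdeal (ht : 3 ≤ t) {p : V →₀ ℕ}
    (hp : monomial p (1 : K) ∈ pathIdeal G t) (e : Sym2 V) :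
    ∃ e' ∈ G.edgeSet, e' ≠ e ∧ edgeMonomial e' ≤ p := by
  obtain ⟨l, hl, rfl, hlp⟩ := monomial_mem_pathIdeal_iff.1 hp
  obtain ⟨a, b, c, l', rfl⟩ : ∃ a b c l', l = a :: b :: c :: l' := by
    match l, ht with
    | a :: b :: c :: l', _ => exact ⟨a, b, c, l', rfl⟩
  simp only [isPathList_iff, List.isChain_cons_cons, List.nodup_cons, List.mem_cons,
    not_or] at hl
  obtain ⟨⟨hab, hbc, -⟩, ⟨-, hac, -⟩, -⟩ := hl
  simp only [List.map_cons, List.sum_cons] at hlp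
  by_cases habe : s(a, b) = e
  · refine ⟨s(b, c), hbc, ?_, le_trans ?_ hlp⟩
    · rw [← habe]
      aesop
    · rw [edgeMonomial_mk, ← add_assoc (Finsupp.single b 1)]
      exact le_self_add.trans le_add_self
  · refine ⟨s(a, b), hab, habe, le_trans ?_ hlp⟩
    rw [edgeMonomial_mk, ← add_assoc]
    exact le_self_add

end PathIdeal

theorem stmt1_general {V K : Type*} [Field K] (G : SimpleGraph V) [Finite G.edgeSet]
    (hgap : G.GapFree) :
    reg (pathIdeal (K := K) G 3) ≤ max (reg (edgeIdeal (K := K) G)) 3 := by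
  let edge : Fin (Nat.card G.edgeSet) ≃ G.edgeSet := (Finite.equivFin G.edgeSet).symm
  have edgeIdeal_eq : edgeIdeal (K := K) G =
      pathIdeal G 3 ⊔ monomialSpan fun i => edgeMonomial (edge i : Sym2 V) := by
    rw [← edgeIdeal_eq_monomialSpan edge, sup_eq_right.2 (pathIdeal_le_edgeIdeal (by norm_num))]
  rw [edgeIdeal_eq]
  refine reg_le_max_reg_sup_monomialSpan (fun i => monomialDegree_edgeMonomial _)
    fun i p hp hne => ?_
  obtain ⟨e', he', hne', hle⟩ : ∃ e' ∈ G.edgeSet, e' ≠ edge i ∧ edgeMonomial e' ≤ p := by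
    rcases hp with hp | ⟨i', rfl⟩
    · exact exists_edgeMonomial_le_of_monomial_mem_pathIdeal le_rfl hp (edge i)
    · exact ⟨edge i', (edge i').2, fun h => hne (congrArg edgeMonomial h), le_rfl⟩
  obtain ⟨w, hwe', hwe, x, hx, hadj⟩ := exists_adj_of_gapFree hgap (edge i).2 he' hne'
  refine ⟨w, ?_, monomial_edgeMonomial_add_single_mem_pathIdeal (edge i).2 hx hwe hadj⟩
  have pos_apply : 0 < edgeMonomial e' w :=
    Nat.pos_of_ne_zero fun h => edgeMonomial_apply_eq_zero_iff.1 h hwe'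
  rw [edgeMonomial_apply_eq_zero_iff.2 hwe]
  exact pos_apply.trans_le (hle w)

/-- If `G` is a finite simple gap-free graph with `I_3(G) ≠ 0` and
`reg (I(G)) = r`, then `reg (I_3(G)) ≤ max {r, 3}`. -/
theorem stmt1 {V K : Type*} [Fintype V] [Field K] (G : SimpleGraph V)
    (hgap : G.GapFree) (h3 : pathIdeal (K := K) G 3 ≠ ⊥) (r : ℕ)
    (hr : reg (edgeIdeal (K := K) G) = r) :
    reg (pathIdeal (K := K) G 3) ≤ max r 3 := by
  exact hr ▸ stmt1_general G hgap
end

section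
/- Let G be a finite simple gap-free graph with nonzero 3-path ideal I_3(G), and let e_1, …, e_k be distinct edges of G (identified with their quadratic monomials). Then the colon ideal (I_3(G) + (e_1, …, e_{k−1})) : (e_k) is an ideal generated by variables. -/
open MvPolynomial

/-!
Write `uv` for the edge we take the colon by, and let `N` be the set of vertices other than `u`
and `v` that are adjacent to `u` or `v`. For `w ∈ N` the monomial `x_w x_u x_v` comes from a path
on three vertices, so `x_w` lies in the colon ideal. Conversely, in a gap-free graph every edge
other than `uv` has an endpoint in `N`. A path on three vertices contains two edges, one of which
is not `uv`, so `I_3(G)` and all the other edges lie in the ideal `(x_w : w ∈ N)`. Modulo that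
ideal `x_u` and `x_v` are nonzerodivisors.
-/

section Variables

variable {σ R : Type*} [CommSemiring R] {s : Set σ}

theorem prod_map_X_mem_span_X_image {l : List σ} (h : ∃ i ∈ l, i ∈ s) :
    ((l.map X).prod : MvPolynomial σ R) ∈ Ideal.span (X '' s) := by
  obtain ⟨i, hil, his⟩ := h
  exact Ideal.mem_of_dvd _ (List.dvd_prod (List.mem_map_of_mem hil))
    (Ideal.subset_span (Set.mem_image_of_mem X his))

theorem mem_span_X_image_of_mul_X_mem {i : σ} (hi : i ∉ s) {p : MvPolynomial σ R}
    (h : p * X i ∈ Ideal.span (X '' s)) : p ∈ Ideal.span (X '' s) := by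
  classical
  rw [mem_ideal_span_X_image] at h ⊢
  intro m hm
  have hm' : m + Finsupp.single i 1 ∈ (p * X i).support := by
    rwa [mem_support_iff, coeff_mul_X, ← mem_support_iff]
  obtain ⟨j, hj, hmj⟩ := h _ hm'
  have hij : i ≠ j := fun hij => hi (hij ▸ hj)
  exact ⟨j, hj, by simpa [hij] using hmj⟩

end Variables

section PairNeighborSet

variable {V : Type*} {G : SimpleGraph V} {u v w x y : V}

/-- The open neighborhood of the pair `{u, v}`: the vertices other than `u` and `v` that are
adjacent to `u` or to `v`. For an edge `uv`, these are the vertices extending it to a path on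
three vertices. -/
def pairNeighborSet (G : SimpleGraph V) (u v : V) : Set V :=
  (G.neighborSet u ∪ G.neighborSet v) \ {u, v}

theorem mem_pairNeighborSet_iff :
    w ∈ pairNeighborSet G u v ↔ (G.Adj u w ∨ G.Adj v w) ∧ w ≠ u ∧ w ≠ v := by
  simp [pairNeighborSet]

theorem mem_or_mem_pairNeighborSet_of_gapFree (hG : G.GapFree) (huv : G.Adj u v)
    (hxy : G.Adj x y) (hne : s(x, y) ≠ s(u, v)) :
    x ∈ pairNeighborSet G u v ∨ y ∈ pairNeighborSet G u v := by
  simp only [mem_pairNeighborSet_iff]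
  by_cases hx : x = u ∨ x = v
  · have hy : y ≠ u ∧ y ≠ v := by grind [Sym2.eq_iff, hxy.ne]
    have hadj : G.Adj u y ∨ G.Adj v y := by rcases hx with rfl | rfl <;> simp [hxy]
    exact .inr ⟨hadj, hy⟩
  by_cases hy : y = u ∨ y = v
  · have hadj : G.Adj u x ∨ G.Adj v x := by rcases hy with rfl | rfl <;> simp [hxy.symm]
    exact .inl ⟨hadj, not_or.mp hx⟩
  · have hjoin : G.Adj u x ∨ G.Adj u y ∨ G.Adj v x ∨ G.Adj v y :=
      hG u v x y huv hxy (by grind) (by grind) (by grind) (by grind)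
    grind

end PairNeighborSet

section PathIdeal

variable {V R : Type*} [CommRing R] {G : SimpleGraph V}

theorem isPathList_triple_iff {x y z : V} :
    G.IsPathList [x, y, z] ↔ G.Adj x y ∧ G.Adj y z ∧ x ≠ z := by
  have hchain : [x, y, z].IsChain G.Adj ↔ G.Adj x y ∧ G.Adj y z := by simp
  have hnodup : [x, y, z].Nodup ↔ (x ≠ y ∧ x ≠ z) ∧ y ≠ z := by simp
  refine (and_congr hchain hnodup).trans ⟨?_, ?_⟩
  · exact fun ⟨⟨hxy, hyz⟩, ⟨_, hxz⟩, _⟩ => ⟨hxy, hyz, hxz⟩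
  · exact fun ⟨hxy, hyz, hxz⟩ => ⟨⟨hxy, hyz⟩, ⟨hxy.ne, hxz⟩, hyz.ne⟩

theorem pathIdeal_three_le_iff {I : Ideal (MvPolynomial V R)} :
    pathIdeal G 3 ≤ I ↔
      ∀ x y z, G.Adj x y → G.Adj y z → x ≠ z → ([x, y, z].map X).prod ∈ I := by
  rw [pathIdeal, Ideal.span_le]
  constructor
  · exact fun h x y z hxy hyz hxz =>
      h ⟨[x, y, z], isPathList_triple_iff.mpr ⟨hxy, hyz, hxz⟩, rfl, rfl⟩
  · rintro h _ ⟨l, hl, hlen, rfl⟩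
    obtain ⟨x, y, z, rfl⟩ := List.length_eq_three.mp hlen
    obtain ⟨hxy, hyz, hxz⟩ := isPathList_triple_iff.mp hl
    exact h x y z hxy hyz hxz

theorem pathIdeal_three_le_span_X_image {s : Set V} {e : Sym2 V}
    (hs : ∀ x y, G.Adj x y → s(x, y) ≠ e → x ∈ s ∨ y ∈ s) :
    pathIdeal G 3 ≤ (Ideal.span (X '' s) : Ideal (MvPolynomial V R)) := by
  refine pathIdeal_three_le_iff.mpr fun x y z hxy hyz hxz => prod_map_X_mem_span_X_image ?_
  have hedges : s(x, y) ≠ e ∨ s(y, z) ≠ e := by grind [Sym2.eq_iff]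
  rcases hedges with he | he
  · rcases hs x y hxy he with h | h
    exacts [⟨x, by simp, h⟩, ⟨y, by simp, h⟩]
  · rcases hs y z hyz he with h | h
    exacts [⟨y, by simp, h⟩, ⟨z, by simp, h⟩]

theorem X_mul_X_mul_X_mem_pathIdeal_three {u v w : V} (huv : G.Adj u v)
    (hw : w ∈ pairNeighborSet G u v) :
    (X w * (X u * X v) : MvPolynomial V R) ∈ pathIdeal G 3 := by
  have hpath := pathIdeal_three_le_iff.mp (le_refl (pathIdeal (K := R) G 3))
  obtain ⟨hadj | hadj, hwu, hwv⟩ := mem_pairNeighborSet_iff.mp hw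
  · simpa using hpath w u v hadj.symm huv hwv
  · simpa [mul_comm (X u)] using hpath w v u hadj.symm huv.symm hwu

end PathIdeal

theorem stmt3_general {V R ι : Type*} [CommRing R] {G : SimpleGraph V} (hG : G.GapFree)
    {u v : V} (huv : G.Adj u v) {a b : ι → V} (hadj : ∀ i, G.Adj (a i) (b i))
    (hne : ∀ i, s(a i, b i) ≠ s(u, v)) :
    Submodule.colon
        (pathIdeal G 3 ⊔ Ideal.span {p : MvPolynomial V R | ∃ i, p = X (a i) * X (b i)})
        (Ideal.span {X u * X v} : Ideal (MvPolynomial V R)) =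
      Ideal.span (X '' pairNeighborSet G u v) := by
  set N := pairNeighborSet G u v
  have hcover : ∀ x y, G.Adj x y → s(x, y) ≠ s(u, v) → x ∈ N ∨ y ∈ N :=
    fun x y => mem_or_mem_pairNeighborSet_of_gapFree hG huv
  have hedges : Ideal.span {p : MvPolynomial V R | ∃ i, p = X (a i) * X (b i)} ≤
      Ideal.span (X '' N) := by
    rw [Ideal.span_le]
    rintro _ ⟨i, rfl⟩
    simpa using prod_map_X_mem_span_X_image (R := R) (l := [a i, b i])
      (by simpa using hcover _ _ (hadj i) (hne i))
  have hle := sup_le (pathIdeal_three_le_span_X_image hcover) hedges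
  refine le_antisymm (fun p hp => ?_) (Ideal.span_le.mpr ?_)
  · have hmem : p * X u * X v ∈ Ideal.span (X '' N) := by
      rw [mul_assoc]
      exact hle (Ideal.mem_colon_span_singleton.mp hp)
    have hu : u ∉ N := fun h => (mem_pairNeighborSet_iff.mp h).2.1 rfl
    have hv : v ∉ N := fun h => (mem_pairNeighborSet_iff.mp h).2.2 rfl
    exact mem_span_X_image_of_mul_X_mem hu (mem_span_X_image_of_mul_X_mem hv hmem)
  · rintro _ ⟨w, hw, rfl⟩
    exact Ideal.mem_colon_span_singleton.mpr
      (Ideal.mem_sup_left (X_mul_X_mul_X_mem_pathIdeal_three huv hw))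

/-- For distinct edges `e_1, …, e_{k+1}` of a gap-free graph `G` with
`I_3(G) ≠ 0`, the colon ideal `(I_3(G) + (e_1, …, e_k)) : (e_{k+1})` is generated by
variables.  (The edge `e_i` has endpoints `a i` and `b i`.) -/
theorem stmt3 {V K : Type*} [Fintype V] [Field K] (G : SimpleGraph V)
    (hgap : G.GapFree) (h3 : pathIdeal (K := K) G 3 ≠ ⊥)
    (k : ℕ) (a b : Fin (k + 1) → V) (hadj : ∀ i, G.Adj (a i) (b i))
    (hdist : ∀ i j, i ≠ j →
      ¬(a i = a j ∧ b i = b j) ∧ ¬(a i = b j ∧ b i = a j)) :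
    ∃ s : Set V,
      Submodule.colon
          (pathIdeal (K := K) G 3 ⊔
            Ideal.span { p : MvPolynomial V K |
              ∃ i : Fin k, p = X (a i.castSucc) * X (b i.castSucc) })
          ((Ideal.span {X (a (Fin.last k)) * X (b (Fin.last k))} : Ideal (MvPolynomial V K)) :
            Set (MvPolynomial V K)) =
        Ideal.span ((fun w => (X w : MvPolynomial V K)) '' s) := by
  exact ⟨_, stmt3_general hgap (hadj _) (fun i => hadj i.castSucc) fun i => by
    simpa [Sym2.eq_iff] using hdist _ _ (Fin.castSucc_lt_last i).ne⟩
end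

section
/- Let G be a finite simple gap-free graph with nonzero 4-path ideal I_4(G), and let e_1, …, e_k, e be distinct edges of G (identified with their quadratic monomials). Then (I_4(G) + (e_1, …, e_k)) : (e) = (I_4(G) : e) + J, where J is an ideal generated by variables. -/
open MvPolynomial

/-!
For monomial ideals, colon by a monomial commutes with sums, so the edge ideal `I(H)` of the graph
`H` with edges `e_i` may be treated apart from `I_4(G)`. It satisfies
`I(H) : (xy) = I(H) + (N_H(x) ∪ N_H(y))`, and the edges in the first summand are redundant: an edge
of `H` that meets `xy` contains a vertex of `N_H(x) ∪ N_H(y)`, while an edge `uv` disjoint from `xy`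
is joined to it, as `G` is gap-free, so that `u, v, x, y` form a path of `G` in some order and
`uv ∈ I_4(G) : (xy)`.
-/

section MonomialIdeals

variable {σ R : Type*} [CommSemiring R]

theorem X_mul_X_eq_monomial (u v : σ) :
    (X u * X v : MvPolynomial σ R) = monomial (Finsupp.single u 1 + Finsupp.single v 1) 1 := by
  rw [X, X, monomial_mul, one_mul]

theorem prod_map_X_eq_monomial (l : List σ) :
    (l.map X).prod = monomial (l.map fun v => Finsupp.single v 1).sum (1 : R) := by
  induction l with
  | nil => simp
  | cons v l ih =>
    rw [List.map_cons, List.prod_cons, ih, X, monomial_mul, one_mul, List.map_cons, List.sum_cons]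

/-- The truncated difference `n - m` is the exponent of `x^n / gcd (x^n, x^m)`. -/
theorem span_monomial_colon_monomial (A : Set (σ →₀ ℕ)) (m : σ →₀ ℕ) :
    (Ideal.span ((fun n => monomial n (1 : R)) '' A)).colon {monomial m (1 : R)} =
      Ideal.span ((fun n => monomial n (1 : R)) '' ((fun n => n - m) '' A)) := by
  ext f
  have support_shift : ∀ p : (σ →₀ ℕ) → Prop,
      (∀ k ∈ (f * monomial m 1).support, p k) ↔ ∀ k ∈ f.support, p (k + m) := by
    intro p
    constructor
    · intro h k hk
      exact h _ (by simpa [coeff_mul_monomial] using hk)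
    · intro h k hk
      rw [mem_support_iff, coeff_mul_monomial', mul_one, ite_ne_right_iff] at hk
      rw [← tsub_add_cancel_of_le hk.1]
      exact h _ (mem_support_iff.2 hk.2)
  simp only [Submodule.mem_colon_singleton, smul_eq_mul, mem_ideal_span_monomial_image,
    support_shift, Set.exists_mem_image, tsub_le_iff_right]

theorem span_monomial_sup_colon_monomial (A B : Set (σ →₀ ℕ)) (m : σ →₀ ℕ) :
    (Ideal.span ((fun n => monomial n (1 : R)) '' A) ⊔
        Ideal.span ((fun n => monomial n (1 : R)) '' B)).colon {monomial m (1 : R)} =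
      (Ideal.span ((fun n => monomial n (1 : R)) '' A)).colon {monomial m (1 : R)} ⊔
        (Ideal.span ((fun n => monomial n (1 : R)) '' B)).colon {monomial m (1 : R)} := by
  simp only [← Ideal.span_union, ← Set.image_union, span_monomial_colon_monomial]

theorem single_add_single_tsub_eq_single {u v x y : σ} (hu : u = x ∨ u = y) (hvx : v ≠ x)
    (hvy : v ≠ y) :
    Finsupp.single u 1 + Finsupp.single v 1 - (Finsupp.single x 1 + Finsupp.single y 1) =
      (Finsupp.single v 1 : σ →₀ ℕ) := by
  classical
  ext w
  simp only [Finsupp.tsub_apply, Finsupp.add_apply, Finsupp.single_apply]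
  grind

theorem single_add_single_tsub_of_disjoint {u v x y : σ} (hux : u ≠ x) (huy : u ≠ y)
    (hvx : v ≠ x) (hvy : v ≠ y) :
    Finsupp.single u 1 + Finsupp.single v 1 - (Finsupp.single x 1 + Finsupp.single y 1) =
      (Finsupp.single u 1 + Finsupp.single v 1 : σ →₀ ℕ) := by
  classical
  ext w
  simp only [Finsupp.tsub_apply, Finsupp.add_apply, Finsupp.single_apply]
  grind

end MonomialIdeals

section EdgeIdeal

variable {V K : Type*} [CommRing K]

theorem X_mul_X_mem_edgeIdeal {H : SimpleGraph V} {u v : V} (h : H.Adj u v) :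
    (X u * X v : MvPolynomial V K) ∈ edgeIdeal H :=
  Ideal.subset_span ⟨u, v, h, rfl⟩

theorem edgeIdeal_eq_span_monomial (H : SimpleGraph V) :
    edgeIdeal (K := K) H = Ideal.span ((fun n => monomial n (1 : K)) ''
      {n | ∃ u v, H.Adj u v ∧ n = Finsupp.single u 1 + Finsupp.single v 1}) := by
  rw [edgeIdeal]
  congr 1
  ext p
  simp only [X_mul_X_eq_monomial, Set.mem_image, Set.mem_ofPred_eq]
  grind

theorem fromEdgeSet_range_le {ι : Type*} {G : SimpleGraph V} {a b : ι → V}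
    (h : ∀ i, G.Adj (a i) (b i)) :
    SimpleGraph.fromEdgeSet (Set.range fun i => s(a i, b i)) ≤ G := by
  rw [SimpleGraph.fromEdgeSet_le]
  rintro _ ⟨⟨i, rfl⟩, -⟩
  exact h i

theorem edgeIdeal_fromEdgeSet_range {ι : Type*} {a b : ι → V} (h : ∀ i, a i ≠ b i) :
    edgeIdeal (K := K) (SimpleGraph.fromEdgeSet (Set.range fun i => s(a i, b i))) =
      Ideal.span {p | ∃ i, p = X (a i) * X (b i)} := by
  rw [edgeIdeal]
  congr 1
  ext p
  simp only [SimpleGraph.fromEdgeSet_adj, Set.mem_range, Set.mem_ofPred_eq, Sym2.eq_iff]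
  grind

theorem edgeIdeal_colon (H : SimpleGraph V) {x y : V} (hxy : ¬H.Adj x y) :
    (edgeIdeal (K := K) H).colon {X x * X y} =
      edgeIdeal H ⊔ Ideal.span (X '' (H.neighborSet x ∪ H.neighborSet y)) := by
  apply le_antisymm
  · rw [X_mul_X_eq_monomial, edgeIdeal_eq_span_monomial, span_monomial_colon_monomial,
      ← edgeIdeal_eq_span_monomial, Ideal.span_le]
    rintro _ ⟨_, ⟨_, ⟨u, v, huv, rfl⟩, rfl⟩, rfl⟩
    wlog hu : u = x ∨ u = y generalizing u v
    · by_cases hv : v = x ∨ v = y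
      · rw [add_comm (Finsupp.single u 1)]
        exact this v u huv.symm hv
      · push Not at hu hv
        dsimp only
        rw [single_add_single_tsub_of_disjoint hu.1 hu.2 hv.1 hv.2, ← X_mul_X_eq_monomial]
        exact Ideal.mem_sup_left (X_mul_X_mem_edgeIdeal huv)
    have hvx : v ≠ x := by grind [H.irrefl, H.adj_comm]
    have hvy : v ≠ y := by grind [H.irrefl]
    have hv : v ∈ H.neighborSet x ∪ H.neighborSet y := by
      rcases hu with rfl | rfl
      exacts [.inl huv, .inr huv]
    dsimp only
    rw [single_add_single_tsub_eq_single hu hvx hvy]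
    exact Ideal.mem_sup_right (Ideal.subset_span ⟨v, hv, rfl⟩)
  · refine sup_le Ideal.le_colon (Ideal.span_le.2 ?_)
    rintro _ ⟨w, hw | hw, rfl⟩
    all_goals rw [SetLike.mem_coe, Submodule.mem_colon_singleton, smul_eq_mul]
    · rw [← mul_assoc, mul_comm (X w)]
      exact Ideal.mul_mem_right _ _ (X_mul_X_mem_edgeIdeal hw)
    · rw [mul_left_comm, mul_comm (X w)]
      exact Ideal.mul_mem_left _ _ (X_mul_X_mem_edgeIdeal hw)

end EdgeIdeal

section PathIdeal

variable {V K : Type*} [CommRing K] {G : SimpleGraph V}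

theorem pathIdeal_eq_span_monomial (G : SimpleGraph V) (t : ℕ) :
    pathIdeal (K := K) G t = Ideal.span ((fun n => monomial n (1 : K)) ''
      {n | ∃ l : List V, G.IsPathList l ∧ l.length = t ∧
        n = (l.map fun v => Finsupp.single v 1).sum}) := by
  rw [pathIdeal]
  congr 1
  ext p
  simp only [prod_map_X_eq_monomial, Set.mem_image, Set.mem_ofPred_eq]
  grind

theorem pathIdeal_sup_edgeIdeal_colon (G H : SimpleGraph V) (t : ℕ) (x y : V) :
    (pathIdeal (K := K) G t ⊔ edgeIdeal H).colon {X x * X y} =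
      (pathIdeal G t).colon {X x * X y} ⊔ (edgeIdeal H).colon {X x * X y} := by
  simp only [pathIdeal_eq_span_monomial, edgeIdeal_eq_span_monomial, X_mul_X_eq_monomial,
    span_monomial_sup_colon_monomial]

theorem exists_isPathList_perm_of_gapFree (hgap : G.GapFree) {u v x y : V} (huv : G.Adj u v)
    (hxy : G.Adj x y) (hux : u ≠ x) (huy : u ≠ y) (hvx : v ≠ x) (hvy : v ≠ y) :
    ∃ l : List V, G.IsPathList l ∧ l.Perm [u, v, x, y] := by
  have isPathList : ∀ {p q r s : V}, G.Adj p q → G.Adj q r → G.Adj r s →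
      [p, q, r, s].Perm [u, v, x, y] → ∃ l : List V, G.IsPathList l ∧ l.Perm [u, v, x, y] := by
    intro p q r s hpq hqr hrs hperm
    have hnodup : [u, v, x, y].Nodup := by
      simp [huv.ne, hxy.ne, hux, huy, hvx, hvy]
    have hchain : List.IsChain G.Adj [p, q, r, s] := by simp [hpq, hqr, hrs]
    exact ⟨_, ⟨hchain, hperm.nodup_iff.2 hnodup⟩, hperm⟩
  rcases hgap u v x y huv hxy hux huy hvx hvy with h | h | h | h
  · exact isPathList huv.symm h hxy (.swap _ _ _)
  · exact isPathList huv.symm h hxy.symm (.trans (.swap _ _ _) (.cons _ (.cons _ (.swap _ _ _))))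
  · exact isPathList huv h hxy (.refl _)
  · exact isPathList huv h hxy.symm (.cons _ (.cons _ (.swap _ _ _)))

theorem X_mul_X_mem_pathIdeal_colon_of_gapFree (hgap : G.GapFree) {u v x y : V} (huv : G.Adj u v)
    (hxy : G.Adj x y) (hux : u ≠ x) (huy : u ≠ y) (hvx : v ≠ x) (hvy : v ≠ y) :
    (X u * X v : MvPolynomial V K) ∈ (pathIdeal G 4).colon {X x * X y} := by
  obtain ⟨l, hl, hperm⟩ := exists_isPathList_perm_of_gapFree hgap huv hxy hux huy hvx hvy
  rw [Submodule.mem_colon_singleton, smul_eq_mul]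
  refine Ideal.subset_span ⟨l, hl, hperm.length_eq, ?_⟩
  rw [(hperm.map X).prod_eq]
  simp [mul_assoc]

theorem edgeIdeal_le_pathIdeal_colon_sup (hgap : G.GapFree) {H : SimpleGraph V} (hH : H ≤ G)
    {x y : V} (hxy : G.Adj x y) :
    edgeIdeal (K := K) H ≤ (pathIdeal G 4).colon {X x * X y} ⊔
      Ideal.span (X '' (H.neighborSet x ∪ H.neighborSet y)) := by
  rw [edgeIdeal, Ideal.span_le]
  rintro _ ⟨u, v, huv, rfl⟩
  have mem_of_neighbor : ∀ w ∈ H.neighborSet x ∪ H.neighborSet y,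
      (X w : MvPolynomial V K) ∈ (pathIdeal G 4).colon {X x * X y} ⊔
        Ideal.span (X '' (H.neighborSet x ∪ H.neighborSet y)) :=
    fun w hw => Ideal.mem_sup_right (Ideal.subset_span ⟨w, hw, rfl⟩)
  by_cases hv : v ∈ H.neighborSet x ∪ H.neighborSet y
  · exact Ideal.mul_mem_left _ _ (mem_of_neighbor v hv)
  by_cases hu : u ∈ H.neighborSet x ∪ H.neighborSet y
  · exact Ideal.mul_mem_right _ _ (mem_of_neighbor u hu)
  · apply Ideal.mem_sup_left
    apply X_mul_X_mem_pathIdeal_colon_of_gapFree hgap (hH huv) hxy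
    · rintro rfl; exact hv (.inl huv)
    · rintro rfl; exact hv (.inr huv)
    · rintro rfl; exact hu (.inl huv.symm)
    · rintro rfl; exact hu (.inr huv.symm)

theorem stmt8_general (hgap : G.GapFree) {H : SimpleGraph V} (hH : H ≤ G) {x y : V}
    (he : G.Adj x y) (heH : ¬H.Adj x y) :
    (pathIdeal (K := K) G 4 ⊔ edgeIdeal H).colon {X x * X y} =
      (pathIdeal G 4).colon {X x * X y} ⊔
        Ideal.span (X '' (H.neighborSet x ∪ H.neighborSet y)) := by
  rw [pathIdeal_sup_edgeIdeal_colon, edgeIdeal_colon H heH, ← sup_assoc, sup_right_comm,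
    sup_eq_left]
  exact edgeIdeal_le_pathIdeal_colon_sup hgap hH he

end PathIdeal

/-- For distinct edges `e_1, …, e_k, e` of a gap-free graph `G` with
`I_4(G) ≠ 0`, one has `(I_4(G) + (e_1, …, e_k)) : (e) = (I_4(G) : e) + J` where `J` is
generated by variables.  (Edge `e_i` has endpoints `a i`, `b i`; `e = xy`.) -/
theorem stmt8 {V K : Type*} [Fintype V] [Field K] (G : SimpleGraph V)
    (hgap : G.GapFree) (h4 : pathIdeal (K := K) G 4 ≠ ⊥)
    (k : ℕ) (a b : Fin k → V) (x y : V)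
    (hadj : ∀ i, G.Adj (a i) (b i)) (he : G.Adj x y)
    (hdist : ∀ i j, i ≠ j →
      ¬(a i = a j ∧ b i = b j) ∧ ¬(a i = b j ∧ b i = a j))
    (hdiste : ∀ i, ¬(a i = x ∧ b i = y) ∧ ¬(a i = y ∧ b i = x)) :
    ∃ s : Set V,
      Submodule.colon
          (pathIdeal (K := K) G 4 ⊔
            Ideal.span { p : MvPolynomial V K | ∃ i : Fin k, p = X (a i) * X (b i) })
          (Ideal.span {X x * X y} : Ideal (MvPolynomial V K)) =
        Submodule.colon (pathIdeal (K := K) G 4) (Ideal.span {X x * X y} : Ideal (MvPolynomial V K)) ⊔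
          Ideal.span ((fun w => (X w : MvPolynomial V K)) '' s) := by
  rw [Ideal.colon_span, Ideal.colon_span, ← edgeIdeal_fromEdgeSet_range fun i => (hadj i).ne]
  exact ⟨_, stmt8_general hgap (fromEdgeSet_range_le hadj) he (by simpa [he.ne] using hdiste)⟩
end
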